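/- Let k be a positive integer. Then R^{inf-div}(k) = E_c(k); that is, a series f ∈ ℂ₀⟨⟨z₁,…,z_k⟩⟩ is the η-series of some distribution in D_c(k) if and only if f is the R-transform of some ⊞-infinitely divisible distribution in D_c(k). -/

import Mathlib

open Finset

attribute [local instance] Classical.propDecidable

open scoped ComplexOrder

namespace BBP

/-- Partitions of `{1,…,m}` modeled as `Finpartition`s of `univ : Finset (Fin m)`. -/
abbrev FP (m : ℕ) := Finpartition (Finset.univ : Finset (Fin m))

noncomputable instance (m : ℕ) : Fintype (FP m) :=
  Fintype.ofInjective (fun π : FP m => π.parts) fun a b h => by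
    cases a; cases b; simpa using h

/-- `x` is the minimum of the set `C`. -/
def IsMinOf {m : ℕ} (x : Fin m) (C : Finset (Fin m)) : Prop :=
  x ∈ C ∧ ∀ y ∈ C, x ≤ y

/-- `x` is the maximum of the set `C`. -/
def IsMaxOf {m : ℕ} (x : Fin m) (C : Finset (Fin m)) : Prop :=
  x ∈ C ∧ ∀ y ∈ C, y ≤ x

/-- `a` and `b` lie in one block of `π`. -/
def SameBlock {m : ℕ} (π : FP m) (a b : Fin m) : Prop :=
  ∃ B ∈ π.parts, a ∈ B ∧ b ∈ B

/-- `π` is non-crossing: if `i<j<k<l`, `i,k` in one block and `j,l` in one block,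
then all of them are in one block. -/
def IsNC {m : ℕ} (π : FP m) : Prop :=
  ∀ i j k l : Fin m, i < j → j < k → k < l →
    SameBlock π i k → SameBlock π j l → SameBlock π i j

/-- `A` embraces `B` : `min A ≤ min B` and `max B ≤ max A`. -/
def Embraces {m : ℕ} (A B : Finset (Fin m)) : Prop :=
  ∃ a₁ a₂ b₁ b₂ : Fin m, IsMinOf a₁ A ∧ IsMaxOf a₂ A ∧ IsMinOf b₁ B ∧ IsMaxOf b₂ B ∧
    a₁ ≤ b₁ ∧ b₂ ≤ a₂

/-- `B` strictly embraces `A` : `min B < min A` and `max A < max B`. -/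
def StrictlyEmbraces {m : ℕ} (B A : Finset (Fin m)) : Prop :=
  ∃ b₁ b₂ a₁ a₂ : Fin m, IsMinOf b₁ B ∧ IsMaxOf b₂ B ∧ IsMinOf a₁ A ∧ IsMaxOf a₂ A ∧
    b₁ < a₁ ∧ a₂ < b₂

/-- `A` is an outer block of `π`. -/
def IsOuter {m : ℕ} (π : FP m) (A : Finset (Fin m)) : Prop :=
  A ∈ π.parts ∧ ¬ ∃ B ∈ π.parts, StrictlyEmbraces B A

/-- The number `|π|_out` of outer blocks of `π`. -/
noncomputable def numOuter {m : ℕ} (π : FP m) : ℕ :=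
  (π.parts.filter fun A => IsOuter π A).card

/-- Reversed refinement order: every block of `ρ` is a union of blocks of `π`. -/
def Refines {m : ℕ} (π ρ : FP m) : Prop :=
  ∀ B ∈ π.parts, ∃ C ∈ ρ.parts, B ⊆ C

/-- The partial order `π ≪ ρ`. -/
def Ll {m : ℕ} (π ρ : FP m) : Prop :=
  Refines π ρ ∧
    ∀ C ∈ ρ.parts, ∃ B ∈ π.parts, ∃ x y : Fin m,
      IsMinOf x C ∧ IsMaxOf y C ∧ x ∈ B ∧ y ∈ B

/-- The partition `1ₙ` of `{1,…,n+1}` with a single block. -/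
noncomputable def fullPart (n : ℕ) : FP (n+1) :=
  Finpartition.indiscrete (by simpa using (Finset.univ_nonempty (α := Fin (n+1))).ne_empty)

/-- `π` is an interval partition. -/
def IsIntervalPartition {m : ℕ} (π : FP m) : Prop :=
  ∀ B ∈ π.parts, ∀ x ∈ B, ∀ z ∈ B, ∀ y : Fin m, x ≤ y → y ≤ z → y ∈ B

/-- `σ` is the permutation associated to `π` : on each block `{b₁ < ⋯ < b_q}` it is the
cycle `b₁ ↦ b₂ ↦ ⋯ ↦ b_q ↦ b₁`. -/
def IsAssocPerm {m : ℕ} (π : FP m) (σ : Equiv.Perm (Fin m)) : Prop :=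
  ∀ B ∈ π.parts, ∀ b ∈ B, σ b ∈ B ∧
    ((b < σ b ∧ ∀ x ∈ B, b < x → σ b ≤ x) ∨ (IsMaxOf b B ∧ IsMinOf (σ b) B))

/-- `κ` is the Kreweras complement of `π`, characterized by `P_κ = P_π⁻¹ ∘ P_{1ₙ}`,
where `P_{1ₙ}` is the cycle `1 ↦ 2 ↦ ⋯ ↦ n ↦ 1` (i.e. `finRotate`). -/
def IsKrewerasPair {m : ℕ} (π κ : FP m) : Prop :=
  ∃ σπ σκ : Equiv.Perm (Fin m), IsAssocPerm π σπ ∧ IsAssocPerm κ σκ ∧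
    σκ = σπ⁻¹ * finRotate m

/-- the element `2a-1` of `{1,…,2n}`, in `Fin (2n)` (0-indexed). -/
def oddEmb {n : ℕ} (a : Fin n) : Fin (2*n) := ⟨2*a.val, by have := a.isLt; omega⟩

/-- the element `2a` of `{1,…,2n}`, in `Fin (2n)` (0-indexed). -/
def evenEmb {n : ℕ} (a : Fin n) : Fin (2*n) := ⟨2*a.val + 1, by have := a.isLt; omega⟩

/-- `θ = π^(odd) ∪ ρ^(even)` : the blocks of `θ` are the sets `{2a-1 : a ∈ A}` for `A`
a block of `π` and the sets `{2b : b ∈ B}` for `B` a block of `ρ`. -/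
def IsOddEvenJoin {n : ℕ} (π ρ : FP n) (θ : FP (2*n)) : Prop :=
  θ.parts = π.parts.image (fun B => B.image oddEmb) ∪
    ρ.parts.image (fun B => B.image evenEmb)

/-- a block consisting of odd elements of `{1,…,2n}` (even 0-indexed values). -/
def OddBlock {m : ℕ} (B : Finset (Fin m)) : Prop := ∀ x ∈ B, x.val % 2 = 0

/-- a block consisting of even elements of `{1,…,2n}` (odd 0-indexed values). -/
def EvenBlock {m : ℕ} (B : Finset (Fin m)) : Prop := ∀ x ∈ B, x.val % 2 = 1

/-- every block of `θ` is contained in the odds or in the evens. -/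
def ParityPreserving {m : ℕ} (θ : FP m) : Prop :=
  ∀ B ∈ θ.parts, OddBlock B ∨ EvenBlock B

def OppositeParity {m : ℕ} (A B : Finset (Fin m)) : Prop :=
  (OddBlock A ∧ EvenBlock B) ∨ (EvenBlock A ∧ OddBlock B)

def SameParity {m : ℕ} (A B : Finset (Fin m)) : Prop :=
  (OddBlock A ∧ OddBlock B) ∨ (EvenBlock A ∧ EvenBlock B)

/-- `P = Parent_θ(A)` : the unique block `P ≠ A` of `θ` embracing `A` such that every
block `A' ≠ A` of `θ` embracing `A` also embraces `P`. -/
def IsParent {m : ℕ} (θ : FP m) (A P : Finset (Fin m)) : Prop :=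
  P ∈ θ.parts ∧ P ≠ A ∧ Embraces P A ∧
    ∀ A' ∈ θ.parts, A' ≠ A → Embraces A' A → Embraces A' P

/-- `θ` has exactly two outer blocks. -/
def ExactlyTwoOuterBlocks {m : ℕ} (θ : FP m) : Prop :=
  ∃ M ∈ θ.parts, ∃ N ∈ θ.parts, M ≠ N ∧ IsOuter θ M ∧ IsOuter θ N ∧
    ∀ A ∈ θ.parts, IsOuter θ A → A = M ∨ A = N

/-- A series in `ℂ₀⟨⟨z₁,…,z_k⟩⟩`, given by its family of coefficients: `f n w` is the
coefficient of `z_{w 0} z_{w 1} ⋯ z_{w n}` (a word of length `n+1 ≥ 1`). -/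
abbrev NCSeries (k : ℕ) := (n : ℕ) → (Fin (n+1) → Fin k) → ℂ

/-- The coefficient `Cf_{w|B}(f)` of the restriction of the word `w` to the set `B`,
listing the elements of `B` in increasing order.  (Equals `1` for `B = ∅`.) -/
noncomputable def partCoeff {k m : ℕ} (f : NCSeries k) (w : Fin (m+1) → Fin k)
    (B : Finset (Fin (m+1))) : ℂ :=
  if h : B.Nonempty then
    f (B.card - 1) (fun j =>
      w ((B.orderIsoOfFin (Nat.succ_pred_eq_of_pos (Finset.card_pos.mpr h)).symm j).1))
  else 1

/-- The generalized coefficient `Cf_{w;π}(f) = ∏_{B block of π} Cf_{w|B}(f)`. -/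
noncomputable def genCoeff {k m : ℕ} (f : NCSeries k) (w : Fin (m+1) → Fin k)
    (π : FP (m+1)) : ℂ :=
  ∏ B ∈ π.parts, partCoeff f w B

/-- Linear functionals on `ℂ⟨X₁,…,X_k⟩`. -/
abbrev Dist (k : ℕ) := FreeAlgebra ℂ (Fin k) →ₗ[ℂ] ℂ

/-- `μ ∈ D_alg(k)` : `μ` is normalized by `μ(1) = 1`. -/
def IsDalg {k : ℕ} (μ : Dist k) : Prop := μ 1 = 1

/-- The moment series `M_μ`, with `(momentSeries μ) n w = μ (X_{w 0} ⋯ X_{w n})`. -/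
noncomputable def momentSeries {k : ℕ} (μ : Dist k) : NCSeries k :=
  fun _ w => μ ((List.ofFn fun j => FreeAlgebra.ι ℂ (w j)).prod)

/-- `f = R_μ` : the moments of `μ` are obtained from `f` by summation over all
non-crossing partitions. -/
def IsRTransform {k : ℕ} (μ : Dist k) (f : NCSeries k) : Prop :=
  ∀ (n : ℕ) (w : Fin (n+1) → Fin k),
    momentSeries μ n w = ∑ π : FP (n+1), if IsNC π then genCoeff f w π else 0

/-- `g = η_μ` : the moments of `μ` are obtained from `g` by summation over all
interval partitions. -/
def IsEtaSeries {k : ℕ} (μ : Dist k) (g : NCSeries k) : Prop :=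
  ∀ (n : ℕ) (w : Fin (n+1) → Fin k),
    momentSeries μ n w = ∑ π : FP (n+1), if IsIntervalPartition π then genCoeff g w π else 0

/-- `μ ∈ D_c(k)` : `μ` is the joint distribution of a `k`-tuple of selfadjoint elements
with respect to a state on a unital C*-algebra. -/
def IsDc {k : ℕ} (μ : Dist k) : Prop :=
  IsDalg μ ∧
  ∃ (A : Type) (_ : NormedRing A) (_ : StarRing A) (_ : CStarRing A)
    (_ : NormedAlgebra ℂ A) (_ : StarModule ℂ A) (_ : CompleteSpace A)
    (φ : A →ₗ[ℂ] ℂ) (x : Fin k → A),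
      φ 1 = 1 ∧ (∀ a : A, 0 ≤ φ (star a * a)) ∧ (∀ i, IsSelfAdjoint (x i)) ∧
      ∀ (n : ℕ) (w : Fin (n+1) → Fin k),
        momentSeries μ n w = φ ((List.ofFn fun j => x (w j)).prod)

/-- convergence in moments. -/
def ConvInMoments {k : ℕ} (μseq : ℕ → Dist k) (μ : Dist k) : Prop :=
  ∀ P : FreeAlgebra ℂ (Fin k),
    Filter.Tendsto (fun N => μseq N P) Filter.atTop (nhds (μ P))

/-- coefficientwise convergence of series. -/
def ConvCoeffwise {k : ℕ} (fseq : ℕ → NCSeries k) (f : NCSeries k) : Prop :=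
  ∀ (n : ℕ) (w : Fin (n+1) → Fin k),
    Filter.Tendsto (fun N => fseq N n w) Filter.atTop (nhds (f n w))

/-- `ν` is the `p`-fold free additive convolution `μ ⊞ ⋯ ⊞ μ`, i.e. `R_ν = p · R_μ`. -/
def IsNFoldFree {k : ℕ} (p : ℕ) (μ ν : Dist k) : Prop :=
  ∃ f : NCSeries k, IsRTransform μ f ∧ IsRTransform ν (fun n w => (p : ℂ) * f n w)

/-- `ν` is the `p`-fold Boolean convolution `μ ⊎ ⋯ ⊎ μ`, i.e. `η_ν = p · η_μ`. -/
def IsNFoldBool {k : ℕ} (p : ℕ) (μ ν : Dist k) : Prop :=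
  ∃ g : NCSeries k, IsEtaSeries μ g ∧ IsEtaSeries ν (fun n w => (p : ℂ) * g n w)

/-- `ν = 𝔹(μ)` : the Boolean Bercovici–Pata bijection, `R_{𝔹(μ)} = η_μ`. -/
def IsBP {k : ℕ} (μ ν : Dist k) : Prop :=
  ∃ f : NCSeries k, IsEtaSeries μ f ∧ IsRTransform ν f

/-- `μ ∈ D_c(k)` is infinitely divisible with respect to `⊞`. -/
def IsInfDiv {k : ℕ} (μ : Dist k) : Prop :=
  IsDc μ ∧ ∀ N : ℕ, 0 < N → ∃ ν : Dist k, IsDc ν ∧ IsNFoldFree N ν μ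

/-- `g = Reta(f)`, i.e. there is `μ ∈ D_alg(k)` with `f = R_μ` and `g = η_μ`. -/
def RetaRel {k : ℕ} (f g : NCSeries k) : Prop :=
  ∃ μ : Dist k, IsDalg μ ∧ IsRTransform μ f ∧ IsEtaSeries μ g



section Combi

variable {α : Type*} [LinearOrder α]

/-- `P` is (the set of blocks of) a partition of `A`. -/
def IsPart (A : Finset α) (P : Finset (Finset α)) : Prop :=
  ∅ ∉ P ∧ (∀ B ∈ P, ∀ C ∈ P, ∀ x, x ∈ B → x ∈ C → B = C) ∧ ∀ x, x ∈ A ↔ ∃ B ∈ P, x ∈ B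

/-- Sum over the partitions of `A` satisfying `q` of the product of block weights. -/
noncomputable def psum (F : Finset α → ℂ) (q : Finset (Finset α) → Prop) (A : Finset α) : ℂ :=
  ∑ P ∈ A.powerset.powerset with IsPart A P ∧ q P, ∏ B ∈ P, F B

lemma IsPart.subset {A : Finset α} {P : Finset (Finset α)} (h : IsPart A P) {B : Finset α}
    (hB : B ∈ P) : B ⊆ A := fun x hx => (h.2.2 x).2 ⟨B, hB, hx⟩

lemma mem_psum {A : Finset α} {q : Finset (Finset α) → Prop} {P : Finset (Finset α)} :
    P ∈ {P ∈ A.powerset.powerset | IsPart A P ∧ q P} ↔ IsPart A P ∧ q P := by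
  simp only [mem_filter, mem_powerset, and_iff_right_iff_imp]
  intro h B hB
  exact mem_powerset.2 (h.1.subset hB)

lemma psum_congr {F : Finset α → ℂ} {q q' : Finset (Finset α) → Prop} {A : Finset α}
    (h : ∀ P, IsPart A P → (q P ↔ q' P)) : psum F q A = psum F q' A := by
  unfold psum
  congr 1
  ext P
  rw [mem_psum, mem_psum]
  constructor
  · rintro ⟨a, b⟩; exact ⟨a, (h P a).1 b⟩
  · rintro ⟨a, b⟩; exact ⟨a, (h P a).2 b⟩

lemma psum_or {F : Finset α → ℂ} {q q1 q2 : Finset (Finset α) → Prop} {A : Finset α}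
    (h : ∀ P, IsPart A P → (q P ↔ q1 P ∨ q2 P)) (h' : ∀ P, IsPart A P → ¬ (q1 P ∧ q2 P)) :
    psum F q A = psum F q1 A + psum F q2 A := by
  unfold psum
  rw [← Finset.sum_union]
  · congr 1
    ext P
    rw [mem_union, mem_psum, mem_psum, mem_psum]
    constructor
    · rintro ⟨a, b⟩
      rcases (h P a).1 b with c | c
      · exact Or.inl ⟨a, c⟩
      · exact Or.inr ⟨a, c⟩
    · rintro (⟨a, b⟩ | ⟨a, b⟩)
      · exact ⟨a, (h P a).2 (Or.inl b)⟩
      · exact ⟨a, (h P a).2 (Or.inr b)⟩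
  · rw [Finset.disjoint_left]
    intro P h1 h2
    rw [mem_psum] at h1 h2
    exact h' P h1.1 ⟨h1.2, h2.2⟩

lemma psum_range {F : Finset α → ℂ} {q : Finset (Finset α) → Prop} {A : Finset α} (n : ℕ)
    (r : ℕ → Finset (Finset α) → Prop)
    (h : ∀ P, IsPart A P → (q P ↔ ∃ i, i < n ∧ r i P))
    (h' : ∀ P, IsPart A P → ∀ i < n, ∀ j < n, r i P → r j P → i = j) :
    psum F q A = ∑ i ∈ range n, psum F (r i) A := by
  unfold psum
  rw [← Finset.sum_biUnion]
  · congr 1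
    ext P
    rw [mem_biUnion, mem_psum]
    constructor
    · rintro ⟨a, b⟩
      obtain ⟨i, hi, c⟩ := (h P a).1 b
      exact ⟨i, mem_range.2 hi, mem_psum.2 ⟨a, c⟩⟩
    · rintro ⟨i, hi, c⟩
      rw [mem_psum] at c
      exact ⟨c.1, (h P c.1).2 ⟨i, mem_range.1 hi, c.2⟩⟩
  · intro i hi j hj hij
    rw [Function.onFun, Finset.disjoint_left]
    intro P h1 h2
    rw [mem_psum] at h1 h2
    exact hij (h' P h1.1 i (by simpa using hi) j (by simpa using hj) h1.2 h2.2)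

lemma IsPart.union {A1 A2 : Finset α} (hd : Disjoint A1 A2) {P1 P2 : Finset (Finset α)}
    (h1 : IsPart A1 P1) (h2 : IsPart A2 P2) : IsPart (A1 ∪ A2) (P1 ∪ P2) := by
  rw [Finset.disjoint_left] at hd
  refine ⟨?_, ?_, ?_⟩
  · rw [mem_union]
    rintro (h | h)
    · exact h1.1 h
    · exact h2.1 h
  · intro B hB C hC x hxB hxC
    rw [mem_union] at hB hC
    rcases hB with hB | hB <;> rcases hC with hC | hC
    · exact h1.2.1 B hB C hC x hxB hxC
    · exact (hd (h1.subset hB hxB) (h2.subset hC hxC)).elim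
    · exact (hd (h1.subset hC hxC) (h2.subset hB hxB)).elim
    · exact h2.2.1 B hB C hC x hxB hxC
  · intro x
    rw [mem_union, h1.2.2, h2.2.2]
    constructor
    · rintro (⟨B, hB, hx⟩ | ⟨B, hB, hx⟩)
      · exact ⟨B, mem_union_left _ hB, hx⟩
      · exact ⟨B, mem_union_right _ hB, hx⟩
    · rintro ⟨B, hB, hx⟩
      rw [mem_union] at hB
      rcases hB with hB | hB
      · exact Or.inl ⟨B, hB, hx⟩
      · exact Or.inr ⟨B, hB, hx⟩

lemma IsPart.restrict {A1 A2 A : Finset α} (hA : ∀ x, x ∈ A ↔ x ∈ A1 ∨ x ∈ A2)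
    (hd : ∀ x, x ∈ A1 → x ∉ A2)
    {P : Finset (Finset α)} (h : IsPart A P) (hs : ∀ C ∈ P, C ⊆ A1 ∨ C ⊆ A2) :
    IsPart A1 (P.filter (· ⊆ A1)) := by
  refine ⟨?_, ?_, ?_⟩
  · intro h0; exact h.1 (mem_filter.1 h0).1
  · intro B hB C hC
    exact h.2.1 B (mem_filter.1 hB).1 C (mem_filter.1 hC).1
  · intro x
    constructor
    · intro hx
      obtain ⟨B, hB, hxB⟩ := (h.2.2 x).1 ((hA x).2 (Or.inl hx))
      refine ⟨B, mem_filter.2 ⟨hB, ?_⟩, hxB⟩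
      rcases hs B hB with c | c
      · exact c
      · exact (hd x hx (c hxB)).elim
    · rintro ⟨B, hB, hx⟩
      exact (mem_filter.1 hB).2 hx

lemma psum_split {F : Finset α → ℂ} {q q1 q2 : Finset (Finset α) → Prop} {A A1 A2 : Finset α}
    (hA : A = A1 ∪ A2) (hd : Disjoint A1 A2)
    (hs : ∀ P, IsPart A P → q P → ∀ C ∈ P, C ⊆ A1 ∨ C ⊆ A2)
    (hq : ∀ P1 P2, IsPart A1 P1 → IsPart A2 P2 → (q (P1 ∪ P2) ↔ q1 P1 ∧ q2 P2)) :
    psum F q A = psum F q1 A1 * psum F q2 A2 := by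
  subst hA
  have hd' := hd
  rw [Finset.disjoint_left] at hd'
  have key : ∀ P, IsPart (A1 ∪ A2) P → (∀ C ∈ P, C ⊆ A1 ∨ C ⊆ A2) →
      IsPart A1 (P.filter (· ⊆ A1)) ∧ IsPart A2 (P.filter (· ⊆ A2)) ∧
      P.filter (· ⊆ A1) ∪ P.filter (· ⊆ A2) = P := by
    intro P hP hc
    refine ⟨hP.restrict (fun x => mem_union) hd' hc,
      hP.restrict (A2 := A1) (fun x => by rw [mem_union, or_comm]) (fun x h h' => hd' h' h)
        (fun C hC => (hc C hC).symm), ?_⟩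
    rw [← Finset.filter_or, Finset.filter_true_of_mem hc]
  have key2 : ∀ P1 P2, IsPart A1 P1 → IsPart A2 P2 →
      (P1 ∪ P2).filter (· ⊆ A1) = P1 ∧ (P1 ∪ P2).filter (· ⊆ A2) = P2 := by
    intro P1 P2 h1 h2
    constructor
    · ext C
      rw [mem_filter, mem_union]
      constructor
      · rintro ⟨h | h, h'⟩
        · exact h
        · exfalso
          obtain ⟨z, hz⟩ := Finset.nonempty_iff_ne_empty.2 (fun h0 : C = ∅ => h2.1 (h0 ▸ h))
          exact hd' (h' hz) (h2.subset h hz)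
      · intro h
        exact ⟨Or.inl h, h1.subset h⟩
    · ext C
      rw [mem_filter, mem_union]
      constructor
      · rintro ⟨h | h, h'⟩
        · exfalso
          obtain ⟨z, hz⟩ := Finset.nonempty_iff_ne_empty.2 (fun h0 : C = ∅ => h1.1 (h0 ▸ h))
          exact hd' (h1.subset h hz) (h' hz)
        · exact h
      · intro h
        exact ⟨Or.inr h, h2.subset h⟩
  unfold psum
  rw [Finset.sum_mul_sum, ← Finset.sum_product']
  refine Finset.sum_bij' (fun P _ => (P.filter (· ⊆ A1), P.filter (· ⊆ A2)))
    (fun p _ => p.1 ∪ p.2) ?_ ?_ ?_ ?_ ?_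
  · intro P hP
    rw [mem_psum] at hP
    obtain ⟨k1, k2, k3⟩ := key P hP.1 (hs P hP.1 hP.2)
    have := hP.2
    rw [← k3, hq _ _ k1 k2] at this
    exact mem_product.2 ⟨mem_psum.2 ⟨k1, this.1⟩, mem_psum.2 ⟨k2, this.2⟩⟩
  · rintro ⟨P1, P2⟩ hp
    rw [mem_product, mem_psum, mem_psum] at hp
    obtain ⟨⟨a1, b1⟩, a2, b2⟩ := hp
    exact mem_psum.2 ⟨a1.union hd a2, (hq _ _ a1 a2).2 ⟨b1, b2⟩⟩
  · intro P hP
    rw [mem_psum] at hP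
    exact (key P hP.1 (hs P hP.1 hP.2)).2.2
  · rintro ⟨P1, P2⟩ hp
    rw [mem_product, mem_psum, mem_psum] at hp
    obtain ⟨⟨a1, b1⟩, a2, b2⟩ := hp
    obtain ⟨k1, k2⟩ := key2 P1 P2 a1 a2
    simp only [k1, k2]
  · intro P hP
    rw [mem_psum] at hP
    obtain ⟨k1, k2, k3⟩ := key P hP.1 (hs P hP.1 hP.2)
    conv_lhs => rw [← k3]
    rw [Finset.prod_union]
    rw [Finset.disjoint_left]
    intro C h1 h2
    obtain ⟨z, hz⟩ := Finset.nonempty_iff_ne_empty.2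
      (fun h0 : C = ∅ => hP.1.1 (h0 ▸ (mem_filter.1 h1).1))
    exact hd' ((mem_filter.1 h1).2 hz) ((mem_filter.1 h2).2 hz)

/-- Non-crossing families. -/
def NCs (P : Finset (Finset α)) : Prop :=
  ∀ i j k l : α, i < j → j < k → k < l → ∀ B ∈ P, ∀ C ∈ P, i ∈ B → k ∈ B → j ∈ C → l ∈ C → B = C

/-- Interval families. -/
def Ints (P : Finset (Finset α)) : Prop :=
  ∀ B ∈ P, ∀ C ∈ P, ∀ x ∈ B, ∀ z ∈ B, ∀ y ∈ C, x ≤ y → y ≤ z → B = C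

/-- the elements of `u` are all in one block. -/
def Together (u : List α) (P : Finset (Finset α)) : Prop :=
  ∀ C ∈ P, (∃ z ∈ u, z ∈ C) → ∀ z ∈ u, z ∈ C

/-- the first and the last element of `x :: a` are in one block. -/
def Ends (x : α) (a : List α) (P : Finset (Finset α)) : Prop :=
  ∀ C ∈ P, x ∈ C → (x :: a).getLast (List.cons_ne_nil x a) ∈ C

lemma getLast_take (x : α) (v : List α) (i : ℕ) (hi : i < v.length + 1) :
    (x :: v.take i).getLast (List.cons_ne_nil _ _) = (x :: v)[i]'(by simpa using hi) := by
  rw [List.getLast_eq_getElem]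
  have h1 : (x :: v.take i) = (x :: v).take (i+1) := by simp
  simp only [h1, List.getElem_take]
  congr 1
  simp
  omega

theorem core (F : Finset α → ℂ) (N : Finset (Finset α) → Prop) (u : List α) (x : α) (v : List α)
    (hs : (u ++ x :: v).Pairwise (· < ·)) (hN : ∀ P, N P → NCs P)
    (hsub : ∀ P Q, Q ⊆ P → N P → N Q)
    (hun : ∀ i, ∀ P1 P2, IsPart (x :: v.take i).toFinset P1 →
      IsPart (u ++ v.drop i).toFinset P2 → N P1 → N P2 → N (P1 ∪ P2)) :
    psum F (fun P => N P ∧ Together u P ∧ ∀ C ∈ P, x ∈ C → ∀ z ∈ u, z ∉ C) (u ++ x :: v).toFinset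
     = ∑ i ∈ range (v.length + 1),
        psum F (fun P => N P ∧ Ends x (v.take i) P) (x :: v.take i).toFinset *
        psum F (fun P => N P ∧ Together u P) (u ++ v.drop i).toFinset := by
  rw [List.pairwise_append] at hs
  obtain ⟨hu, hxv, huv⟩ := hs
  have hnd : (x :: v).Nodup := hxv.imp (fun h => ne_of_lt h)
  -- facts about the last element
  have hmemv : ∀ i z, z ∈ v ↔ z ∈ v.take i ∨ z ∈ v.drop i := by
    intro i z
    rw [← List.mem_append, List.take_append_drop]
  have hle : ∀ i, ∀ z ∈ x :: v.take i, z ≤ (x :: v.take i).getLast (List.cons_ne_nil _ _) := by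
    intro i z hz
    have : (x :: v.take i).Pairwise (· < ·) := by
      have : (x :: v.take i).Sublist (x :: v) := (List.take_sublist i v).cons_cons x
      exact hxv.sublist this
    have h2 : (x :: v.take i).Pairwise (· ≤ ·) := this.imp le_of_lt
    rw [List.getLast_eq_getElem]
    obtain ⟨j, hj, rfl⟩ := List.mem_iff_getElem.1 hz
    rcases Nat.lt_or_ge j ((x :: v.take i).length - 1) with h | h
    · exact List.pairwise_iff_getElem.1 h2 _ _ hj (by simp) h
    · apply le_of_eq; congr 1; omega
  have hlt : ∀ i, ∀ z ∈ v.drop i, ∀ z' ∈ x :: v.take i, z' < z := by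
    intro i z hz z' hz'
    have : ((x :: v.take i) ++ v.drop i).Pairwise (· < ·) := by simpa using hxv
    exact (List.pairwise_append.1 this).2.2 z' hz' z hz
  have hxle : ∀ z ∈ x :: v, x ≤ z := by
    intro z hz
    rcases List.mem_cons.1 hz with rfl | h
    · exact le_rfl
    · exact le_of_lt (List.rel_of_pairwise_cons hxv h)
  have hxu : ∀ z ∈ u, z < x := fun z hz => huv z hz x (by simp)
  rw [psum_range (v.length + 1) (fun i P => N P ∧ Together u P ∧
    ∀ C ∈ P, x ∈ C → (∀ z ∈ u, z ∉ C) ∧ (x :: v.take i).getLast (List.cons_ne_nil _ _) ∈ C ∧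
      ∀ z ∈ C, z ≤ (x :: v.take i).getLast (List.cons_ne_nil _ _))]
  · refine Finset.sum_congr rfl fun i hi => ?_
    set y := (x :: v.take i).getLast (List.cons_ne_nil _ _) with hy
    have hyx : y ∈ x :: v.take i := List.getLast_mem _
    refine psum_split ?_ ?_ ?_ ?_
    · ext z
      simp only [List.mem_toFinset, List.mem_append, List.mem_cons, mem_union, hmemv i z]
      tauto
    · rw [Finset.disjoint_left]
      intro z h1 h2
      rw [List.mem_toFinset] at h1 h2
      rcases List.mem_append.1 h2 with h | h
      · have h3 : z ∈ x :: v := List.mem_cons.2 ((List.mem_cons.1 h1).imp_right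
          (fun h => (hmemv i z).2 (Or.inl h)))
        exact lt_irrefl z (huv z h z h3)
      · exact lt_irrefl z (hlt i z h z h1)
    · rintro P hP ⟨hNP, hT, hx⟩ C hC
      obtain ⟨D, hD, hxD⟩ := (hP.2.2 x).1 (by simp)
      obtain ⟨hDu, hyD, hDy⟩ := hx D hD hxD
      have hmem : ∀ z ∈ C, z ∈ u ∨ z ∈ x :: v.take i ∨ z ∈ v.drop i := by
        intro z hz
        have := hP.subset hC hz
        rw [List.mem_toFinset, List.mem_append, List.mem_cons, hmemv i z] at this
        rw [List.mem_cons]; tauto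
      by_cases hCD : C = D
      · left
        subst hCD
        intro z hz
        rw [List.mem_toFinset]
        rcases hmem z hz with h | h | h
        · exact (hDu z h hz).elim
        · exact h
        · exact (not_lt_of_ge (hDy z hz) (hlt i z h y hyx)).elim
      · by_contra hcon
        push Not at hcon
        obtain ⟨hc1, hc2⟩ := hcon
        obtain ⟨d, hd, hd'⟩ := Finset.not_subset.1 hc1
        obtain ⟨c, hc, hc'⟩ := Finset.not_subset.1 hc2
        rw [List.mem_toFinset] at hd' hc'
        rw [List.mem_append] at hc'
        have hcm : c ∈ x :: v.take i := by
          rcases hmem c hc with h | h | h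
          · exact (hc' (Or.inl h)).elim
          · exact h
          · exact (hc' (Or.inr h)).elim
        have hcx : x < c := by
          refine lt_of_le_of_ne (hxle c ?_) ?_
          · exact List.mem_cons.2 ((List.mem_cons.1 hcm).imp_right
              (fun h => (hmemv i c).2 (Or.inl h)))
          · rintro rfl; exact hCD (hP.2.1 C hC D hD _ hc hxD)
        have hcy : c < y := by
          refine lt_of_le_of_ne (hle i c hcm) ?_
          intro h
          rw [h] at hc
          exact hCD (hP.2.1 C hC D hD _ hc hyD)
        rcases hmem d hd with h | h | h
        · exact hCD (hN P hNP d x c y (hxu d h) hcx hcy C hC D hD hd hc hxD hyD)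
        · exact hd' h
        · exact hCD (hN P hNP x c y d hcx hcy (hlt i d h y hyx) D hD C hC hxD hyD hc hd).symm
    · intro P1 P2 h1 h2
      constructor
      · rintro ⟨hNP, hT, hx⟩
        refine ⟨⟨hsub _ _ subset_union_left hNP, ?_⟩, hsub _ _ subset_union_right hNP, ?_⟩
        · intro C hC hxC
          exact (hx C (mem_union_left _ hC) hxC).2.1
        · intro C hC
          exact hT C (mem_union_right _ hC)
      · rintro ⟨⟨n1, hE⟩, n2, hT⟩
        have hPu : ∀ C ∈ P1, ∀ z ∈ u, z ∉ C := by
          intro C hC z hz hzC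
          have := h1.subset hC hzC
          rw [List.mem_toFinset] at this
          have h3 : z ∈ x :: v := List.mem_cons.2 ((List.mem_cons.1 this).imp_right
            (fun h => (hmemv i z).2 (Or.inl h)))
          exact lt_irrefl z (huv z hz z h3)
        refine ⟨hun i P1 P2 h1 h2 n1 n2, ?_, ?_⟩
        · intro C hC
          rcases mem_union.1 hC with h | h
          · rintro ⟨z, hz, hz'⟩
            exact (hPu C h z hz hz').elim
          · exact hT C h
        · intro C hC hxC
          rcases mem_union.1 hC with h | h
          · refine ⟨hPu C h, hE C h hxC, ?_⟩
            intro z hz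
            have := h1.subset h hz
            rw [List.mem_toFinset] at this
            exact hle i z this
          · exfalso
            have := h2.subset h hxC
            rw [List.mem_toFinset, List.mem_append] at this
            rcases this with h | h
            · exact lt_irrefl x (hxu x h)
            · exact lt_irrefl x (hlt i x h x (by simp))
  · intro P hP
    constructor
    · rintro ⟨hNP, hT, hx⟩
      obtain ⟨D, hD, hxD⟩ := (hP.2.2 x).1 (by simp)
      have hne : D.Nonempty := ⟨x, hxD⟩
      have hm : D.max' hne ∈ x :: v := by
        have := hP.subset hD (D.max'_mem hne)
        rw [List.mem_toFinset, List.mem_append] at this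
        rcases this with h | h
        · exact (hx D hD hxD _ h (D.max'_mem hne)).elim
        · exact h
      obtain ⟨i, hi, hi'⟩ := List.mem_iff_getElem.1 hm
      have hi2 : i < v.length + 1 := by simpa using hi
      refine ⟨i, hi2, hNP, hT, ?_⟩
      intro C hC hxC
      obtain rfl := hP.2.1 C hC D hD x hxC hxD
      rw [getLast_take x v i hi2, hi']
      exact ⟨hx C hC hxC, C.max'_mem hne, fun z hz => C.le_max' z hz⟩
    · rintro ⟨i, hi, hNP, hT, hx⟩
      exact ⟨hNP, hT, fun C hC hxC => (hx C hC hxC).1⟩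
  · rintro P hP i hi j hj ⟨-, -, h1⟩ ⟨-, -, h2⟩
    obtain ⟨D, hD, hxD⟩ := (hP.2.2 x).1 (by simp)
    obtain ⟨-, a1, b1⟩ := h1 D hD hxD
    obtain ⟨-, a2, b2⟩ := h2 D hD hxD
    have := le_antisymm (b2 _ a1) (b1 _ a2)
    rw [getLast_take x v i hi, getLast_take x v j hj] at this
    exact (List.Nodup.getElem_inj_iff hnd).1 this

end Combi

section Systems

variable {α : Type*} [LinearOrder α]

lemma psum_single {F : Finset α → ℂ} {q : Finset (Finset α) → Prop} {A : Finset α}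
    (hA : A.Nonempty) (h : ∀ P, IsPart A P → (q P ↔ P = {A})) : psum F q A = F A := by
  unfold psum
  have : {P ∈ A.powerset.powerset | IsPart A P ∧ q P} = {{A}} := by
    ext P
    rw [mem_psum, mem_singleton]
    constructor
    · rintro ⟨h1, h2⟩; exact (h P h1).1 h2
    · rintro rfl
      have hp : IsPart A {A} := by
        refine ⟨?_, ?_, ?_⟩
        · rw [mem_singleton]; exact fun h => hA.ne_empty h.symm
        · intro B hB C hC x _ _
          rw [mem_singleton] at hB hC
          rw [hB, hC]
        · intro x; simp
      exact ⟨hp, (h _ hp).2 rfl⟩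
  rw [this]; simp

lemma psum_empty {F : Finset α → ℂ} {q : Finset (Finset α) → Prop} (h : q ∅) :
    psum F q ∅ = 1 := by
  unfold psum
  have : {P ∈ (∅ : Finset α).powerset.powerset | IsPart ∅ P ∧ q P} = {∅} := by
    ext P
    rw [mem_psum, mem_singleton]
    constructor
    · rintro ⟨h1, h2⟩
      rw [Finset.eq_empty_iff_forall_notMem]
      intro B hB
      have : B = ∅ := Finset.subset_empty.1 (h1.subset hB)
      exact h1.1 (this ▸ hB)
    · rintro rfl
      exact ⟨⟨by simp, by simp, by simp⟩, h⟩
  rw [this]; simp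

lemma IsPart.eq_singleton {A : Finset α} {P : Finset (Finset α)} (h : IsPart A P)
    (hA : A.Nonempty) (hall : ∀ C ∈ P, A ⊆ C) : P = {A} := by
  have h1 : ∀ C ∈ P, C = A := fun C hC => (h.subset hC).antisymm (hall C hC)
  ext C
  rw [mem_singleton]
  constructor
  · exact h1 C
  · rintro rfl
    obtain ⟨x, hx⟩ := hA
    obtain ⟨B, hB, _⟩ := (h.2.2 x).1 hx
    exact h1 B hB ▸ hB

lemma NCs.mono {P Q : Finset (Finset α)} (h : Q ⊆ P) (hP : NCs P) : NCs Q :=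
  fun i j k l a b c B hB C hC => hP i j k l a b c B (h hB) C (h hC)

lemma Ints.mono {P Q : Finset (Finset α)} (h : Q ⊆ P) (hP : Ints P) : Ints Q :=
  fun B hB C hC => hP B (h hB) C (h hC)

lemma Ints.ncs {P : Finset (Finset α)} (hP : Ints P) : NCs P :=
  fun i j k _ a b _ B hB C hC hi hk hj _ => hP B hB C hC i hi k hk j hj a.le b.le

lemma ncs_singleton (A : Finset α) : NCs {A} := by
  intro i j k l _ _ _ B hB C hC _ _ _ _
  rw [mem_singleton] at hB hC
  rw [hB, hC]

lemma ints_singleton (A : Finset α) : Ints {A} := by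
  intro B hB C hC _ _ _ _ _ _ _ _
  rw [mem_singleton] at hB hC
  rw [hB, hC]

/-- Non-crossing sum over `u ∪ v`, with `u` in one block. -/
noncomputable def Sp (F : Finset α → ℂ) (u v : List α) : ℂ :=
  psum F (fun P => NCs P ∧ Together u P) (u ++ v).toFinset

/-- Non-crossing sum over `x :: a`, with first and last in one block. -/
noncomputable def hp (F : Finset α → ℂ) (x : α) (a : List α) : ℂ :=
  psum F (fun P => NCs P ∧ Ends x a P) (x :: a).toFinset

/-- Interval sum. -/
noncomputable def Jp (F : Finset α → ℂ) (v : List α) : ℂ := psum F Ints v.toFinset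

lemma Sp_nil_nil (F : Finset α → ℂ) : Sp F [] [] = 1 := by
  apply psum_empty
  exact ⟨fun i j k l _ _ _ B hB => by simp at hB, fun B hB => by simp at hB⟩

lemma Jp_nil (F : Finset α → ℂ) : Jp F [] = 1 := by
  apply psum_empty
  exact fun B hB => by simp at hB

lemma Sp_nil_right (F : Finset α → ℂ) (u : List α) (hu : u ≠ []) : Sp F u [] = F u.toFinset := by
  unfold Sp
  rw [List.append_nil]
  have hne : u.toFinset.Nonempty := by
    obtain ⟨x, hx⟩ := List.exists_mem_of_ne_nil u hu
    exact ⟨x, List.mem_toFinset.2 hx⟩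
  apply psum_single hne
  intro P hP
  constructor
  · rintro ⟨_, hT⟩
    apply hP.eq_singleton hne
    intro C hC z hz
    obtain ⟨c, hc⟩ := Finset.nonempty_iff_ne_empty.2 (fun h0 : C = ∅ => hP.1 (h0 ▸ hC))
    exact hT C hC ⟨c, List.mem_toFinset.1 (hP.subset hC hc), hc⟩ z (List.mem_toFinset.1 hz)
  · rintro rfl
    refine ⟨ncs_singleton _, ?_⟩
    intro C hC _ z hz
    rw [mem_singleton] at hC
    rw [hC]; exact List.mem_toFinset.2 hz

lemma together_nil (P : Finset (Finset α)) : Together [] P := by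
  intro C _ _ z hz; simp at hz

lemma Sp_nil_cons (F : Finset α → ℂ) (x : α) (v : List α) : Sp F [] (x :: v) = Sp F [x] v := by
  unfold Sp
  apply psum_congr
  intro P _
  refine and_congr_right fun _ => iff_of_true (together_nil P) ?_
  rintro C _ ⟨z, hz, hz'⟩ z2 hz2
  simp at hz hz2
  subst hz; subst hz2; exact hz'

lemma nc_union (u : List α) (x : α) (v : List α)
    (hs : (u ++ x :: v).Pairwise (· < ·)) (i : ℕ) (P1 P2 : Finset (Finset α))
    (h1 : IsPart (x :: v.take i).toFinset P1)
    (h2 : IsPart (u ++ v.drop i).toFinset P2) (n1 : NCs P1) (n2 : NCs P2) : NCs (P1 ∪ P2) := by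
  have hs' : (u ++ ((x :: v.take i) ++ v.drop i)).Pairwise (· < ·) := by simpa using hs
  rw [List.pairwise_append] at hs'
  obtain ⟨-, hxv, huv⟩ := hs'
  have hvv := (List.pairwise_append.1 hxv).2.2
  have key : ∀ a b c, a ∈ (x :: v.take i).toFinset → c ∈ (x :: v.take i).toFinset →
      b ∈ (u ++ v.drop i).toFinset → a < b → b < c → False := by
    intro a b c ha hc hb hab hbc
    rw [List.mem_toFinset] at ha hb hc
    rcases List.mem_append.1 hb with h | h
    · exact lt_asymm hab (huv b h a (List.mem_append_left _ ha))
    · exact lt_asymm hbc (hvv c hc b h)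
  intro i j k l hij hjk hkl B hB C hC hi hk hj hl
  rcases mem_union.1 hB with hB | hB <;> rcases mem_union.1 hC with hC | hC
  · exact n1 i j k l hij hjk hkl B hB C hC hi hk hj hl
  · exact (key i j k (h1.subset hB hi) (h1.subset hB hk) (h2.subset hC hj) hij hjk).elim
  · exact (key j k l (h1.subset hC hj) (h1.subset hC hl) (h2.subset hB hk) hjk hkl).elim
  · exact n2 i j k l hij hjk hkl B hB C hC hi hk hj hl

lemma Sp_nil_cons' (F : Finset α → ℂ) (x : α) (v : List α) (hs : (x :: v).Pairwise (· < ·)) :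
    Sp F [] (x :: v) = ∑ i ∈ range (v.length + 1), hp F x (v.take i) * Sp F [] (v.drop i) := by
  have := core F NCs [] x v (by simpa using hs) (fun P h => h) (fun P Q h => NCs.mono h)
    (fun i P1 P2 => nc_union [] x v (by simpa using hs) i P1 P2)
  unfold hp Sp
  rw [← this]
  apply psum_congr
  intro P _
  simp

lemma Sp_cons (F : Finset α → ℂ) (u : List α) (hu : u ≠ []) (x : α) (v : List α)
    (hs : (u ++ x :: v).Pairwise (· < ·)) :
    Sp F u (x :: v) = Sp F (u ++ [x]) v +
      ∑ i ∈ range (v.length + 1), hp F x (v.take i) * Sp F u (v.drop i) := by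
  have := core F NCs u x v hs (fun P h => h) (fun P Q h => NCs.mono h)
    (fun i P1 P2 => nc_union u x v hs i P1 P2)
  unfold hp Sp
  rw [← this, List.append_assoc, List.singleton_append]
  obtain ⟨u0, hu0⟩ := List.exists_mem_of_ne_nil u hu
  apply psum_or
  · intro P hP
    constructor
    · rintro ⟨hN, hT⟩
      by_cases h : ∀ C ∈ P, x ∈ C → ∀ z ∈ u, z ∉ C
      · exact Or.inr ⟨hN, hT, h⟩
      · left
        refine ⟨hN, ?_⟩
        push Not at h
        obtain ⟨D, hD, hxD, z0, hz0, hz0D⟩ := h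
        have hall : ∀ z ∈ u ++ [x], z ∈ D := by
          intro z hz
          rcases List.mem_append.1 hz with h | h
          · exact hT D hD ⟨z0, hz0, hz0D⟩ z h
          · simp at h; rw [h]; exact hxD
        rintro C hC ⟨z, hz, hzC⟩
        obtain rfl := hP.2.1 C hC D hD z hzC (hall z hz)
        exact hall
    · rintro (⟨hN, hT⟩ | ⟨hN, hT, _⟩)
      · refine ⟨hN, ?_⟩
        rintro C hC ⟨z, hz, hzC⟩ z' hz'
        exact hT C hC ⟨z, List.mem_append_left _ hz, hzC⟩ z' (List.mem_append_left _ hz')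
      · exact ⟨hN, hT⟩
  · rintro P hP ⟨⟨_, hT⟩, _, _, hx⟩
    obtain ⟨D, hD, hxD⟩ := (hP.2.2 x).1 (by simp)
    exact hx D hD hxD u0 hu0 (hT D hD ⟨x, by simp, hxD⟩ u0 (by simp [hu0]))

lemma int_union (x : α) (v : List α)
    (hs : (x :: v).Pairwise (· < ·)) (i : ℕ) (P1 P2 : Finset (Finset α))
    (h1 : IsPart (x :: v.take i).toFinset P1)
    (h2 : IsPart ([] ++ v.drop i).toFinset P2) (n1 : Ints P1) (n2 : Ints P2) :
    Ints (P1 ∪ P2) := by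
  have hs' : ((x :: v.take i) ++ v.drop i).Pairwise (· < ·) := by simpa using hs
  have hvv := (List.pairwise_append.1 hs').2.2
  have key : ∀ a b, a ∈ (x :: v.take i).toFinset → b ∈ ([] ++ v.drop i).toFinset → a < b := by
    intro a b ha hb
    rw [List.mem_toFinset] at ha hb
    exact hvv a ha b hb
  intro B hB C hC a ha c hc b hb hab hbc
  rcases mem_union.1 hB with hB | hB <;> rcases mem_union.1 hC with hC | hC
  · exact n1 B hB C hC a ha c hc b hb hab hbc
  · exact (not_lt_of_ge hbc (key c b (h1.subset hB hc) (h2.subset hC hb))).elim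
  · exact (not_lt_of_ge hab (key b a (h1.subset hC hb) (h2.subset hB ha))).elim
  · exact n2 B hB C hC a ha c hc b hb hab hbc

lemma Jp_cons (F : Finset α → ℂ) (x : α) (v : List α) (hs : (x :: v).Pairwise (· < ·)) :
    Jp F (x :: v) = ∑ i ∈ range (v.length + 1),
      F (x :: v.take i).toFinset * Jp F (v.drop i) := by
  have := core F Ints [] x v (by simpa using hs) (fun P h => h.ncs) (fun P Q h => Ints.mono h)
    (fun i P1 P2 => int_union x v hs i P1 P2)
  have e1 : Jp F (x :: v) = psum F (fun P => Ints P ∧ Together [] P ∧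
      ∀ C ∈ P, x ∈ C → ∀ z ∈ ([] : List α), z ∉ C) ([] ++ x :: v).toFinset := by
    apply psum_congr
    intro P _
    simp [together_nil]
  rw [e1, this]
  refine Finset.sum_congr rfl fun i _ => ?_
  congr 1
  · have hsi : (x :: v.take i).Pairwise (· < ·) :=
      hs.sublist ((List.take_sublist i v).cons_cons x)
    apply psum_single ⟨x, by simp⟩
    intro P hP
    constructor
    · rintro ⟨hI, hE⟩
      obtain ⟨D, hD, hxD⟩ := (hP.2.2 x).1 (by simp)
      have hDall : (x :: v.take i).toFinset ⊆ D := by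
        intro z hz
        obtain ⟨C, hC, hzC⟩ := (hP.2.2 z).1 hz
        rw [List.mem_toFinset] at hz
        have h1 : x ≤ z := by
          rcases List.mem_cons.1 hz with rfl | h
          · exact le_rfl
          · exact le_of_lt (List.rel_of_pairwise_cons hsi h)
        have h2 : z ≤ (x :: v.take i).getLast (List.cons_ne_nil _ _) := by
          have h2 : (x :: v.take i).Pairwise (· ≤ ·) := hsi.imp le_of_lt
          rw [List.getLast_eq_getElem]
          obtain ⟨j, hj, rfl⟩ := List.mem_iff_getElem.1 hz
          rcases Nat.lt_or_ge j ((x :: v.take i).length - 1) with h | h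
          · exact List.pairwise_iff_getElem.1 h2 _ _ hj (by simp) h
          · apply le_of_eq; congr 1; omega
        have := hI D hD C hC x hxD _ (hE D hD hxD) z hzC h1 h2
        rw [this]; exact hzC
      apply hP.eq_singleton ⟨x, by simp⟩
      intro C hC
      obtain ⟨c, hc⟩ := Finset.nonempty_iff_ne_empty.2 (fun h0 : C = ∅ => hP.1 (h0 ▸ hC))
      rw [hP.2.1 C hC D hD c hc (hDall (hP.subset hC hc))]
      exact hDall
    · rintro rfl
      refine ⟨ints_singleton _, ?_⟩
      intro C hC _
      rw [mem_singleton] at hC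
      rw [hC, List.mem_toFinset]
      exact List.getLast_mem _
  · apply psum_congr
    intro P _
    simp [together_nil]

lemma sum_FP (m : ℕ) (F : Finset (Fin m) → ℂ) (q' : FP m → Prop)
    (q : Finset (Finset (Fin m)) → Prop) (h : ∀ π : FP m, q' π ↔ q π.parts) :
    (∑ π : FP m, if q' π then ∏ B ∈ π.parts, F B else 0) = psum F q univ := by
  rw [← Finset.sum_filter]
  unfold psum
  have hpart : ∀ π : FP m, IsPart univ π.parts := by
    intro π
    refine ⟨?_, ?_, ?_⟩
    · exact π.bot_notMem
    · intro B hB C hC x hx hx'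
      by_contra hne
      have := π.disjoint hB hC hne
      exact (Finset.disjoint_left.1 this hx hx').elim
    · intro x
      simp only [mem_univ, true_iff]
      exact π.exists_mem (mem_univ x)
  refine Finset.sum_bij (fun π _ => π.parts) ?_ ?_ ?_ ?_
  · intro π hπ
    rw [mem_filter] at hπ
    exact mem_psum.2 ⟨hpart π, (h π).1 hπ.2⟩
  · intro π _ ρ _ hh
    exact Finpartition.ext hh
  · intro P hP
    rw [mem_psum] at hP
    obtain ⟨hP, hq⟩ := hP
    refine ⟨⟨P, ?_, ?_, hP.1⟩, ?_, rfl⟩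
    · rw [Finset.supIndep_iff_pairwiseDisjoint]
      intro B hB C hC hne
      rw [Function.onFun, id, id, Finset.disjoint_left]
      intro x hx hx'
      exact hne (hP.2.1 B hB C hC x hx hx')
    · ext x
      simp only [mem_sup, id, mem_univ, iff_true]
      exact (hP.2.2 x).1 (mem_univ x)
    · rw [mem_filter]
      exact ⟨mem_univ _, (h _).2 hq⟩
  · intro π _
    rfl

lemma sameBlock_iff {m : ℕ} (π : FP m) (a b : Fin m) :
    SameBlock π a b ↔ ∃ B ∈ π.parts, a ∈ B ∧ b ∈ B := Iff.rfl

lemma part_eq {m : ℕ} (π : FP m) {B C : Finset (Fin m)} (hB : B ∈ π.parts) (hC : C ∈ π.parts)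
    {x : Fin m} (hx : x ∈ B) (hx' : x ∈ C) : B = C := by
  by_contra hne
  exact (Finset.disjoint_left.1 (π.disjoint hB hC hne) hx hx').elim

lemma isNC_iff {m : ℕ} (π : FP m) : IsNC π ↔ NCs π.parts := by
  constructor
  · intro h i j k l hij hjk hkl B hB C hC hi hk hj hl
    obtain ⟨D, hD, hiD, hjD⟩ := h i j k l hij hjk hkl ⟨B, hB, hi, hk⟩ ⟨C, hC, hj, hl⟩
    rw [part_eq π hB hD hi hiD, part_eq π hC hD hj hjD]
  · rintro h i j k l hij hjk hkl ⟨B, hB, hi, hk⟩ ⟨C, hC, hj, hl⟩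
    obtain rfl := h i j k l hij hjk hkl B hB C hC hi hk hj hl
    exact ⟨B, hB, hi, hj⟩

lemma isInt_iff {m : ℕ} (π : FP m) : IsIntervalPartition π ↔ Ints π.parts := by
  constructor
  · intro h B hB C hC x hx z hz y hy hxy hyz
    exact part_eq π hB hC (h B hB x hx z hz y hxy hyz) hy
  · intro h B hB x hx z hz y hxy hyz
    obtain ⟨C, hC, hy⟩ := π.exists_mem (mem_univ y)
    rw [h B hB C hC x hx z hz y hy hxy hyz]; exact hy

end Systems

section Words

variable {L : Type*}

/-- words with a stack, Fock-space walk -/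
def eW (f : List L → ℂ) : List (List L) → List L → ℂ
  | [], [] => 1
  | _ :: _, [] => 0
  | [], x :: v => f [x] * eW f [] v + eW f [[x]] v
  | u :: s, x :: v => f [x] * eW f (u :: s) v + eW f ([x] :: u :: s) v + eW f ((u ++ [x]) :: s) v
      + f (u ++ [x]) * eW f s v
termination_by _ v => v

/-- walk first reaching the empty stack at the end -/
def gW (f : List L → ℂ) : List (List L) → List L → ℂ
  | [], [] => 1
  | _ :: _, [] => 0
  | [], _ :: _ => 0
  | u :: s, x :: v => f [x] * gW f (u :: s) v + gW f ([x] :: u :: s) v + gW f ((u ++ [x]) :: s) v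
      + f (u ++ [x]) * gW f s v
termination_by _ v => v

def hW (f : List L → ℂ) (u v : List L) : ℂ := gW f [u] v + f u * gW f [] v

def SW (f : List L → ℂ) (u v : List L) : ℂ := eW f [u] v + f u * eW f [] v

lemma e_append (f : List L → ℂ) (v : List L) : ∀ s t : List (List L),
    eW f (s ++ t) v = ∑ i ∈ range (v.length + 1), gW f s (v.take i) * eW f t (v.drop i) := by
  induction v with
  | nil =>
    intro s t
    cases s <;> simp [gW, eW]
  | cons x v ih =>
    intro s t
    rw [List.length_cons, Finset.sum_range_succ']
    cases s with
    | nil => simp [gW]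
    | cons u s =>
      have h1 := ih (u :: s) t
      have h2 := ih ([x] :: u :: s) t
      have h3 := ih ((u ++ [x]) :: s) t
      have h4 := ih s t
      simp only [List.cons_append] at h1 h2 h3 h4
      simp only [List.cons_append, List.take_succ_cons, List.drop_succ_cons, List.take_zero,
        List.drop_zero]
      rw [eW, h1, h2, h3, h4]
      have : gW f (u :: s) [] = 0 := by rw [gW]
      rw [this, zero_mul, add_zero, Finset.mul_sum, Finset.mul_sum, ← Finset.sum_add_distrib,
        ← Finset.sum_add_distrib, ← Finset.sum_add_distrib]
      refine Finset.sum_congr rfl fun i _ => ?_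
      rw [gW]; ring

lemma ep_eq (f : List L → ℂ) (u : List L) (t : List (List L)) (v : List L) :
    eW f (u :: t) v + f u * eW f t v
      = ∑ i ∈ range (v.length + 1), hW f u (v.take i) * eW f t (v.drop i) := by
  have h1 := e_append f v [u] t
  have h2 := e_append f v [] t
  simp only [List.cons_append, List.nil_append] at h1 h2
  conv_lhs => rw [h1, h2]
  rw [Finset.mul_sum, ← Finset.sum_add_distrib]
  refine Finset.sum_congr rfl fun i _ => ?_
  rw [hW]; ring

lemma e_nil_nil (f : List L → ℂ) : eW f [] [] = 1 := by rw [eW]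

lemma e_cons_nil (f : List L → ℂ) (u s) : eW f (u :: s) [] = 0 := by rw [eW]

lemma e_nil_cons (f : List L → ℂ) (x : L) (v : List L) : eW f [] (x :: v) = SW f [x] v := by
  rw [eW, SW]; ring

lemma e_nil_cons' (f : List L → ℂ) (x : L) (v : List L) : eW f [] (x :: v) =
    ∑ i ∈ range (v.length + 1), hW f [x] (v.take i) * eW f [] (v.drop i) := by
  rw [e_nil_cons, SW, ep_eq]

lemma S_nil (f : List L → ℂ) (u : List L) : SW f u [] = f u := by
  rw [SW, eW, eW]; ring

lemma S_cons (f : List L → ℂ) (u : List L) (x : L) (v : List L) : SW f u (x :: v) =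
    SW f (u ++ [x]) v + ∑ i ∈ range (v.length + 1), hW f [x] (v.take i) * SW f u (v.drop i) := by
  have h1 := ep_eq f [x] [u] v
  have h2 := ep_eq f [x] [] v
  have h3 : ∑ i ∈ range (v.length + 1), hW f [x] (v.take i) * SW f u (v.drop i)
      = (eW f [[x], u] v + f [x] * eW f [u] v) + f u * (eW f [[x]] v + f [x] * eW f [] v) := by
    rw [h1, h2, Finset.mul_sum, ← Finset.sum_add_distrib]
    refine Finset.sum_congr rfl fun i _ => ?_
    rw [SW]; ring
  rw [h3, SW, SW, eW, eW]; ring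

/-- top-term inversion -/
lemma h_inv (f : List L → ℂ) (x : L) (v : List L) : hW f [x] v =
    eW f [] (x :: v) - ∑ i ∈ range v.length, hW f [x] (v.take i) * eW f [] (v.drop i) := by
  rw [e_nil_cons', Finset.sum_range_succ, List.take_length, List.drop_length, e_nil_nil]; ring

lemma S_inv (f : List L → ℂ) (u : List L) (x : L) (v : List L) : SW f (u ++ [x]) v =
    SW f u (x :: v) - ∑ i ∈ range (v.length + 1), hW f [x] (v.take i) * SW f u (v.drop i) := by
  rw [S_cons]; ring

/-- boolean sum -/
def bW (f : List L → ℂ) : List L → ℂ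
  | [] => 1
  | x :: v => ∑ i : Fin (v.length + 1), f (x :: v.take i) * bW f (v.drop i)
termination_by v => v.length
decreasing_by simp

lemma b_nil (f : List L → ℂ) : bW f [] = 1 := by rw [bW]

lemma b_cons (f : List L → ℂ) (x : L) (v : List L) : bW f (x :: v) =
    ∑ i ∈ range (v.length + 1), f (x :: v.take i) * bW f (v.drop i) := by
  rw [bW, Finset.sum_range]

lemma b_inv (f : List L → ℂ) (x : L) (v : List L) : f (x :: v) = bW f (x :: v) -
    ∑ i ∈ range v.length, f (x :: v.take i) * bW f (v.drop i) := by
  rw [b_cons, Finset.sum_range_succ, List.take_length, List.drop_length, b_nil]; ring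

end Words

section Bridge

variable {L : Type*} {α : Type*} [LinearOrder α]

lemma pw_take {u : List α} {x : α} {v : List α} (hs : (u ++ x :: v).Pairwise (· < ·)) (i : ℕ) :
    (x :: v.take i).Pairwise (· < ·) := by
  have h1 : (x :: v).Pairwise (· < ·) := (List.pairwise_append.1 hs).2.1
  exact h1.sublist ((List.take_sublist i v).cons_cons x)

lemma pw_drop {u : List α} {x : α} {v : List α} (hs : (u ++ x :: v).Pairwise (· < ·)) (i : ℕ) :
    (u ++ v.drop i).Pairwise (· < ·) := by
  refine hs.sublist ?_
  exact (List.Sublist.refl u).append ((List.drop_sublist i v).trans (List.sublist_cons_self x v))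

lemma bridge_hp (F : Finset α → ℂ) (f : List L → ℂ) (c : α → L) (n : ℕ)
    (A : ∀ u v : List α, u ≠ [] → u.length + v.length ≤ n → (u ++ v).Pairwise (· < ·) →
      Sp F u v = SW f (u.map c) (v.map c)) :
    (∀ v : List α, v.length ≤ n → v.Pairwise (· < ·) → Sp F [] v = eW f [] (v.map c)) ∧
    (∀ m (x : α) (a : List α), a.length ≤ m → a.length + 1 ≤ n → (x :: a).Pairwise (· < ·) →
      hp F x a = hW f [c x] (a.map c)) := by
  have h0 : ∀ v : List α, v.length ≤ n → v.Pairwise (· < ·) → Sp F [] v = eW f [] (v.map c) := by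
    intro v hv hs
    cases v with
    | nil => rw [Sp_nil_nil, List.map_nil, e_nil_nil]
    | cons x v =>
      rw [Sp_nil_cons, A [x] v (by simp) (by simpa [add_comm] using hv) hs, List.map_cons (l := v),
        e_nil_cons]
      rfl
  refine ⟨h0, ?_⟩
  intro m
  induction m with
  | zero =>
    intro x a ha hn hs
    have : a = [] := List.length_eq_zero_iff.1 (by omega)
    subst this
    have h1 := Sp_nil_cons' F x [] hs
    rw [h0 [x] (by simpa using hn) hs] at h1
    simp [Sp_nil_nil] at h1
    rw [← h1]
    have := h_inv f (c x) []
    simpa using this.symm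
  | succ m ih =>
    intro x a ha hn hs
    have h1 := Sp_nil_cons' F x a hs
    rw [Finset.sum_range_succ, List.take_length, List.drop_length, Sp_nil_nil, mul_one,
      h0 (x :: a) (by simpa using hn) hs] at h1
    rw [h_inv, eq_sub_iff_add_eq, add_comm, ← List.map_cons, h1]
    congr 1
    rw [List.length_map]
    refine Finset.sum_congr rfl fun i hi => ?_
    rw [Finset.mem_range] at hi
    have hl : (a.take i).length = i := by simp; omega
    rw [ih x (a.take i) (by omega) (by omega) (pw_take (u := []) hs i),
      h0 (a.drop i) (by simp; omega) (pw_drop (u := []) hs i), List.map_take, List.map_drop]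

lemma bridge_A (F : Finset α → ℂ) (f : List L → ℂ) (c : α → L)
    (hF : ∀ u : List α, u ≠ [] → u.Pairwise (· < ·) → F u.toFinset = f (u.map c)) (n : ℕ) :
    ∀ u v : List α, u ≠ [] → u.length + v.length ≤ n → (u ++ v).Pairwise (· < ·) →
      Sp F u v = SW f (u.map c) (v.map c) := by
  induction n with
  | zero =>
    intro u v hu hl
    exact absurd (List.length_eq_zero_iff.1 (by omega)) hu
  | succ n ih =>
    obtain ⟨h0, h1⟩ := bridge_hp F f c n ih
    intro u v
    induction v generalizing u with
    | nil =>
      intro hu hl hs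
      rw [Sp_nil_right F u hu, List.map_nil, S_nil, hF u hu (by simpa using hs)]
    | cons x v ihv =>
      intro hu hl hs
      have hul : 0 < u.length := List.length_pos_iff.2 hu
      rw [Sp_cons F u hu x v hs, List.map_cons, S_cons, List.length_map]
      simp only [List.length_cons] at hl
      congr 1
      · rw [ihv (u ++ [x]) (by simp) (by simp; omega) (by simpa using hs)]
        simp
      · refine Finset.sum_congr rfl fun i hi => ?_
        rw [Finset.mem_range] at hi
        rw [h1 n x (v.take i) (by simp; omega) (by simp; omega) (pw_take hs i),
          ih u (v.drop i) hu (by simp; omega) (pw_drop hs i), List.map_take, List.map_drop]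

lemma bridge_e (F : Finset α → ℂ) (f : List L → ℂ) (c : α → L)
    (hF : ∀ u : List α, u ≠ [] → u.Pairwise (· < ·) → F u.toFinset = f (u.map c))
    (v : List α) (hv : v.Pairwise (· < ·)) : Sp F [] v = eW f [] (v.map c) :=
  (bridge_hp F f c v.length (bridge_A F f c hF _)).1 v le_rfl hv

lemma bridge_b (F : Finset α → ℂ) (f : List L → ℂ) (c : α → L)
    (hF : ∀ u : List α, u ≠ [] → u.Pairwise (· < ·) → F u.toFinset = f (u.map c)) (n : ℕ) :
    ∀ v : List α, v.length ≤ n → v.Pairwise (· < ·) → Jp F v = bW f (v.map c) := by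
  induction n with
  | zero =>
    intro v hv _
    have : v = [] := List.length_eq_zero_iff.1 (by omega)
    subst this
    rw [Jp_nil, List.map_nil, b_nil]
  | succ n ih =>
    intro v hv hs
    cases v with
    | nil => rw [Jp_nil, List.map_nil, b_nil]
    | cons x v =>
      rw [Jp_cons F x v hs, List.map_cons, b_cons, List.length_map]
      refine Finset.sum_congr rfl fun i hi => ?_
      simp only [List.length_cons] at hv
      rw [hF _ (by simp) (pw_take (u := []) hs i),
        ih (v.drop i) (by simp; omega) (pw_drop (u := []) hs i)]
      simp

end Bridge

section Coeffs

variable {k : ℕ}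

/-- series as function on words, `1` on the empty word -/
def fL (f : NCSeries k) : List (Fin k) → ℂ
  | [] => 1
  | x :: l => f l.length (fun i => (x :: l).get i)

lemma fL_ofFn (f : NCSeries k) (n : ℕ) (w : Fin (n+1) → Fin k) : fL f (List.ofFn w) = f n w := by
  have key : ∀ (l : List (Fin k)) (hl : l.length = n + 1), fL f l = f n (fun i => l.get (i.cast hl.symm)) := by
    intro l hl
    cases l with
    | nil => simp at hl
    | cons x l =>
      simp only [List.length_cons, Nat.add_right_cancel_iff] at hl
      subst hl
      rfl
  rw [key _ (List.length_ofFn)]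
  congr 1
  funext i
  rw [List.get_ofFn]
  rfl

lemma partCoeff_eq (f : NCSeries k) {n : ℕ} (w : Fin (n+1) → Fin k) (u : List (Fin (n+1)))
    (hu : u ≠ []) (hs : u.Pairwise (· < ·)) : partCoeff f w u.toFinset = fL f (u.map w) := by
  have hne : u.toFinset.Nonempty := by
    obtain ⟨x, hx⟩ := List.exists_mem_of_ne_nil u hu
    exact ⟨x, by simpa using hx⟩
  rw [partCoeff, dif_pos hne, ← fL_ofFn f]
  congr 1
  rw [List.ofFn_eq_map]
  have h1 := Finset.listMap_orderEmbOfFin_finRange u.toFinset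
    ((Nat.succ_pred_eq_of_pos (Finset.card_pos.mpr hne)).symm)
  have h2 : u.toFinset.sort (· ≤ ·) = u := by
    refine (List.toFinset_sort (· ≤ ·) hs.nodup).2 (hs.imp le_of_lt)
  rw [h2] at h1
  conv_rhs => rw [← h1, List.map_map]
  rfl

/-- moments -/
noncomputable def mom (μ : Dist k) (l : List (Fin k)) : ℂ := μ ((l.map (FreeAlgebra.ι ℂ)).prod)

lemma momentSeries_eq (μ : Dist k) (n : ℕ) (w : Fin (n+1) → Fin k) :
    momentSeries μ n w = mom μ (List.ofFn w) := by
  rw [momentSeries, mom, List.map_ofFn]; rfl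

lemma finRange_univ (n : ℕ) : (univ : Finset (Fin n)) = (List.finRange n).toFinset := by
  ext; simp

lemma ncsum_eq (f : NCSeries k) (n : ℕ) (w : Fin (n+1) → Fin k) :
    (∑ π : FP (n+1), if IsNC π then genCoeff f w π else 0) = eW (fL f) [] (List.ofFn w) := by
  have h1 := sum_FP (n+1) (partCoeff f w) IsNC NCs (fun π => isNC_iff π)
  unfold genCoeff
  rw [h1, List.ofFn_eq_map, ← bridge_e (partCoeff f w) (fL f) w
    (fun u hu hs => by convert partCoeff_eq f w u hu hs) _
    (List.pairwise_lt_finRange _), Sp, finRange_univ]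
  rw [psum_congr (q' := fun P => NCs P ∧ Together [] P)]
  · congr!
  · intro P _
    simp [Together]

lemma intsum_eq (f : NCSeries k) (n : ℕ) (w : Fin (n+1) → Fin k) :
    (∑ π : FP (n+1), if IsIntervalPartition π then genCoeff f w π else 0)
      = bW (fL f) (List.ofFn w) := by
  have h1 := sum_FP (n+1) (partCoeff f w) IsIntervalPartition Ints (fun π => isInt_iff π)
  unfold genCoeff
  rw [h1, List.ofFn_eq_map, ← bridge_b (partCoeff f w) (fL f) w
    (fun u hu hs => by convert partCoeff_eq f w u hu hs) _ _ le_rfl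
    (List.pairwise_lt_finRange _), Jp, finRange_univ]
  congr!

lemma forall_words {P : List (Fin k) → Prop} :
    (∀ (n : ℕ) (w : Fin (n+1) → Fin k), P (List.ofFn w)) ↔ ∀ l, l ≠ [] → P l := by
  constructor
  · intro H l hl
    cases l with
    | nil => exact absurd rfl hl
    | cons x l =>
      have := H l.length (fun i => (x :: l).get i)
      have h2 : List.ofFn (fun i => (x :: l).get i) = x :: l := List.ofFn_get (x :: l)
      exact h2 ▸ this
  · intro H n w
    exact H _ (by simp)

lemma isR_iff (μ : Dist k) (f : NCSeries k) :
    IsRTransform μ f ↔ ∀ l, l ≠ [] → mom μ l = eW (fL f) [] l := by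
  rw [← forall_words, IsRTransform]
  simp only [momentSeries_eq, ncsum_eq]

lemma isEta_iff (μ : Dist k) (f : NCSeries k) :
    IsEtaSeries μ f ↔ ∀ l, l ≠ [] → mom μ l = bW (fL f) l := by
  rw [← forall_words, IsEtaSeries]
  simp only [momentSeries_eq, intsum_eq]

end Coeffs

section Positivity

/-- positive kernels -/
abbrev PD {ι : Type*} (K : ι → ι → ℂ) : Prop := Matrix.PosSemidef (Matrix.of K)

lemma PD.symm' {ι : Type*} {K : ι → ι → ℂ} (hK : PD K) (i j : ι) : star (K j i) = K i j :=
  hK.isHermitian.apply i j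

lemma PD.nn {ι : Type*} {K : ι → ι → ℂ} (hK : PD K) (x : ι →₀ ℂ) :
    0 ≤ x.sum fun i a => x.sum fun j b => star a * K i j * b := hK.2 x

lemma PD.mk' {ι : Type*} {K : ι → ι → ℂ} (h1 : ∀ i j, star (K j i) = K i j)
    (h2 : ∀ x : ι →₀ ℂ, 0 ≤ x.sum fun i a => x.sum fun j b => star a * K i j * b) : PD K :=
  ⟨Matrix.IsHermitian.ext h1, h2⟩

lemma PD.pull {ι κ : Type*} {K : ι → ι → ℂ} (hK : PD K) (r : κ → ι) :
    PD (fun i j => K (r i) (r j)) := Matrix.PosSemidef.submatrix hK r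

lemma PD.mul {ι : Type*} {K K' : ι → ι → ℂ} (hK : PD K) (hK' : PD K') :
    PD (fun i j => K i j * K' i j) := Matrix.PosSemidef.hadamard hK hK'

lemma PD.add' {ι : Type*} {K K' : ι → ι → ℂ} (hK : PD K) (hK' : PD K') :
    PD (fun i j => K i j + K' i j) := Matrix.PosSemidef.add hK hK'

open scoped InnerProductSpace

lemma PD.gram {ι V : Type*} [SeminormedAddCommGroup V] [InnerProductSpace ℂ V] (ξ : ι → V) :
    PD (fun i j => ⟪ξ i, ξ j⟫_ℂ) := by
  refine PD.mk' (fun i j => inner_conj_symm _ _) fun x => ?_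
  have : (x.sum fun i a => x.sum fun j b => star a * ⟪ξ i, ξ j⟫_ℂ * b)
      = ⟪x.sum fun i a => a • ξ i, x.sum fun i a => a • ξ i⟫_ℂ := by
    simp only [Finsupp.sum, sum_inner]
    refine Finset.sum_congr rfl fun i _ => ?_
    rw [inner_sum]
    refine Finset.sum_congr rfl fun j _ => ?_
    rw [inner_smul_left, inner_smul_right, Complex.star_def]; ring
  rw [this, inner_self_eq_norm_sq_to_K]
  norm_cast
  positivity

lemma PD.ind {ι : Type*} (c : ι → ℂ) : PD (fun i j => star (c i) * c j) := by
  have := PD.gram (V := ℂ) c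
  refine Eq.mp (congrArg _ ?_) this
  funext i j
  simp [mul_comm]

/-- the pre-Hilbert space of a kernel -/
def PV {ι : Type*} (K : ι → ι → ℂ) (_ : PD K) := ι →₀ ℂ

section PVsec
variable {ι : Type*} {K : ι → ι → ℂ} (hK : PD K)

noncomputable instance : AddCommGroup (PV K hK) := inferInstanceAs (AddCommGroup (ι →₀ ℂ))
noncomputable instance : Module ℂ (PV K hK) := inferInstanceAs (Module ℂ (ι →₀ ℂ))

lemma pv_conj (hK : PD K) (p q : ι →₀ ℂ) :
    starRingEnd ℂ (q.sum fun i a => p.sum fun j b => star a * K i j * b) =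
      p.sum fun i a => q.sum fun j b => star a * K i j * b := by
  rw [Finsupp.sum_comm]
  simp only [Finsupp.sum, map_sum]
  refine Finset.sum_congr rfl fun i _ => Finset.sum_congr rfl fun j _ => ?_
  have := hK.symm' i j
  simp only [Complex.star_def] at this ⊢
  rw [← this]
  simp; ring

lemma pv_add (K : ι → ι → ℂ) (p q r : ι →₀ ℂ) :
    ((p + q).sum fun i a => r.sum fun j b => star a * K i j * b) =
      (p.sum fun i a => r.sum fun j b => star a * K i j * b) +
      (q.sum fun i a => r.sum fun j b => star a * K i j * b) := by
  refine Finsupp.sum_add_index' (fun i => by simp) fun i a b => ?_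
  rw [← Finsupp.sum_add]
  refine Finsupp.sum_congr fun j _ => ?_
  simp; ring

lemma pv_smul (K : ι → ι → ℂ) (p q : ι →₀ ℂ) (c : ℂ) :
    ((c • p).sum fun i a => q.sum fun j b => star a * K i j * b) =
      starRingEnd ℂ c * (p.sum fun i a => q.sum fun j b => star a * K i j * b) := by
  refine (Finsupp.sum_smul_index (fun i => by simp)).trans ?_
  rw [Finsupp.mul_sum]
  refine Finsupp.sum_congr fun i _ => ?_
  rw [Finsupp.mul_sum]
  refine Finsupp.sum_congr fun j _ => ?_
  simp; ring

noncomputable abbrev pvCore : PreInnerProductSpace.Core ℂ (PV K hK) where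
  inner p q := Finsupp.sum (M := ℂ) p fun i a => Finsupp.sum (M := ℂ) q fun j b => star a * K i j * b
  conj_inner_symm p q := pv_conj hK p q
  re_inner_nonneg p := (RCLike.nonneg_iff.mp (hK.nn p)).1
  add_left p q r := pv_add K p q r
  smul_left p q c := pv_smul K p q c

noncomputable instance : SeminormedAddCommGroup (PV K hK) :=
  InnerProductSpace.Core.toSeminormedAddCommGroup (c := pvCore hK)
noncomputable instance : InnerProductSpace ℂ (PV K hK) :=
  InnerProductSpace.ofCore (pvCore hK)

/-- basis vectors -/
noncomputable def dl (i : ι) : PV K hK := Finsupp.single i (1 : ℂ)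

lemma inner_dl (i j : ι) : ⟪dl hK i, dl hK j⟫_ℂ = K i j := by
  change Finsupp.sum (Finsupp.single i (1:ℂ)) (fun i a =>
    Finsupp.sum (Finsupp.single j (1:ℂ)) fun j b => star a * K i j * b) = _
  simp

lemma pv_induction {p : PV K hK → Prop} (h0 : p 0) (hadd : ∀ v w, p v → p w → p (v + w))
    (hs : ∀ (c : ℂ) i, p (c • dl hK i)) (v : PV K hK) : p v := by
  refine Finsupp.induction_linear (motive := p) v h0 hadd fun i c => ?_
  have := hs c i
  have h2 : c • dl hK i = (Finsupp.single i c : ι →₀ ℂ) := by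
    change c • (Finsupp.single i (1:ℂ)) = _
    simp
  rwa [h2] at this

/-- linear extension -/
noncomputable def pvLift (T : ι → PV K hK) : PV K hK →ₗ[ℂ] PV K hK :=
  Finsupp.lsum ℂ fun i => LinearMap.toSpanSingleton ℂ (PV K hK) (T i)

lemma pvLift_dl (T : ι → PV K hK) (i : ι) : pvLift hK T (dl hK i) = T i := by
  refine (Finsupp.lsum_single ℂ _ i (1:ℂ)).trans ?_
  simp

lemma pvLift_symm (T : ι → PV K hK) (h : ∀ i j, ⟪T i, dl hK j⟫_ℂ = ⟪dl hK i, T j⟫_ℂ) (v w) :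
    ⟪pvLift hK T v, w⟫_ℂ = ⟪v, pvLift hK T w⟫_ℂ := by
  induction v using pv_induction with
  | h0 => simp
  | hadd v w h1 h2 => simp [inner_add_left, h1, h2]
  | hs c i =>
    induction w using pv_induction with
    | h0 => simp
    | hadd v w h1 h2 => simp only [inner_add_right, map_add, h1, h2]
    | hs d j =>
      simp only [map_smul, inner_smul_left, inner_smul_right, pvLift_dl, h]

end PVsec

section Sym
variable {k : ℕ} {V : Type*} [SeminormedAddCommGroup V] [InnerProductSpace ℂ V]
  (X : Fin k → (V →ₗ[ℂ] V)) (Ω : V)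

/-- word action -/
def act : List (Fin k) → V
  | [] => Ω
  | x :: l => X x (act l)

lemma act_sym (hX : ∀ i v w, ⟪X i v, w⟫_ℂ = ⟪v, X i w⟫_ℂ) (u v : List (Fin k)) :
    ⟪act X Ω u, act X Ω v⟫_ℂ = ⟪Ω, act X Ω (u.reverse ++ v)⟫_ℂ := by
  induction u generalizing v with
  | nil => simp [act]
  | cons x u ih =>
    have := ih (x :: v)
    simp only [act, hX] at this ⊢
    rw [this]; simp

lemma bounded_of_growth (Y : V →ₗ[ℂ] V) (hY : ∀ v w, ⟪Y v, w⟫_ℂ = ⟪v, Y w⟫_ℂ) (D : ℝ) (hD : 0 < D)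
    (v : V) (hv : ∃ C : ℝ, ∀ n : ℕ, ‖(Y^n) v‖ ≤ C * D^n) : ‖Y v‖ ≤ D * ‖v‖ := by
  obtain ⟨C, hC⟩ := hv
  set a : ℕ → ℝ := fun n => ‖(Y^n) v‖ with ha
  have hlc : ∀ n, a (n+1) * a (n+1) ≤ a n * a (n+2) := by
    intro n
    have h1 : ⟪(Y^(n+1)) v, (Y^(n+1)) v⟫_ℂ = ⟪(Y^n) v, (Y^(n+2)) v⟫_ℂ := by
      rw [pow_succ' Y n, pow_succ' Y (n+1), pow_succ' Y n]
      simp only [Module.End.mul_apply, hY]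
    have h2 : a (n+1) * a (n+1) = ‖⟪(Y^(n+1)) v, (Y^(n+1)) v⟫_ℂ‖ := by
      rw [inner_self_eq_norm_sq_to_K]; simp [ha, sq]
    rw [h2, h1]
    exact norm_inner_le_norm _ _
  have a0 : a 0 = ‖v‖ := by simp [ha]
  have a1 : a 1 = ‖Y v‖ := by simp [ha]
  rw [← a0, ← a1]
  by_contra hcon
  push Not at hcon
  have hnn : ∀ n, 0 ≤ a n := fun n => norm_nonneg _
  have hpos0 : 0 < a 0 := by
    rcases (hnn 0).lt_or_eq with h | h
    · exact h
    · exfalso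
      have := hlc 0
      rw [← h] at this hcon
      simp at this hcon
      nlinarith
  obtain ⟨r, hr, hr1⟩ : ∃ r, D < r ∧ a 1 = r * a 0 := by
    refine ⟨a 1 / a 0, ?_, by field_simp⟩
    rwa [lt_div_iff₀ hpos0]
  have hrpos : 0 < r := hD.trans hr
  have key : ∀ n, 0 < a n ∧ r * a n ≤ a (n+1) := by
    intro n
    induction n with
    | zero => exact ⟨hpos0, hr1.ge⟩
    | succ n ih =>
      obtain ⟨h1, h2⟩ := ih
      have h3 : 0 < a (n+1) := lt_of_lt_of_le (by positivity) h2
      refine ⟨h3, ?_⟩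
      have h4 := hlc n
      have h5 : a n * (r * a (n+1)) ≤ a n * a (n+2) := by nlinarith
      exact le_of_mul_le_mul_left h5 h1
  have key2 : ∀ n, r^n * a 0 ≤ a n := by
    intro n
    induction n with
    | zero => simp
    | succ n ih =>
      have := (key n).2
      rw [pow_succ']
      nlinarith
  have h1 : 1 < r / D := by rwa [one_lt_div hD]
  obtain ⟨n, hn⟩ := pow_unbounded_of_one_lt (C / a 0) h1
  rw [div_pow, div_lt_div_iff₀ hpos0 (by positivity)] at hn
  have := (key2 n).trans (hC n)
  linarith


/-- words in linear maps -/
lemma act_eq (l : List (Fin k)) : act X Ω l = (l.map X).prod Ω := by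
  induction l with
  | nil => simp [act]
  | cons x l ih => simp [act, ih]

end Sym

section GNS
variable {k : ℕ} {V : Type} [SeminormedAddCommGroup V] [InnerProductSpace ℂ V]
  (X : Fin k → (V →ₗ[ℂ] V)) (Ω : V)

/-- the distribution of a symmetric tuple -/
noncomputable def distOf : Dist k :=
  (innerSL ℂ Ω).toLinearMap ∘ₗ (LinearMap.applyₗ Ω) ∘ₗ
    (FreeAlgebra.lift ℂ (A := Module.End ℂ V) X).toLinearMap

lemma mom_distOf (l : List (Fin k)) : mom (distOf X Ω) l = ⟪Ω, act X Ω l⟫_ℂ := by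
  rw [act_eq, mom, distOf]
  simp only [LinearMap.comp_apply, AlgHom.toLinearMap_apply, map_list_prod, List.map_map]
  have : (FreeAlgebra.lift ℂ (A := Module.End ℂ V) X) ∘ (FreeAlgebra.ι ℂ) = X := by
    funext i; simp
  rw [this]
  rfl

lemma isDc_distOf (hΩ : ⟪Ω, Ω⟫_ℂ = 1) (hX : ∀ i v w, ⟪X i v, w⟫_ℂ = ⟪v, X i w⟫_ℂ) (D : ℝ)
    (hb : ∀ i v, ‖X i v‖ ≤ D * ‖v‖) : IsDc (distOf X Ω) := by
  have h1 : IsDalg (distOf X Ω) := by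
    have := mom_distOf X Ω []
    rw [mom] at this
    simp only [act, hΩ, List.map_nil, List.prod_nil] at this
    exact this
  let Y : Fin k → (V →L[ℂ] V) := fun i => (X i).mkContinuous D (hb i)
  let H := UniformSpace.Completion V
  let Z : Fin k → (H →L[ℂ] H) := fun i => (Y i).completion
  let ω : H := (Ω : UniformSpace.Completion V)
  have hZ : ∀ i (v : V), Z i (v : UniformSpace.Completion V) = (X i v : UniformSpace.Completion V) := by
    intro i v
    exact (Y i).completion_apply_coe v
  refine ⟨h1, H →L[ℂ] H, inferInstance, inferInstance, inferInstance, inferInstance, inferInstance,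
    inferInstance, (innerSL ℂ ω).toLinearMap ∘ₗ (ContinuousLinearMap.apply ℂ H ω).toLinearMap,
    Z, ?_, ?_, ?_, ?_⟩
  · change ⟪ω, ω⟫_ℂ = 1
    rw [UniformSpace.Completion.inner_coe, hΩ]
  · intro a
    change 0 ≤ ⟪ω, (star a * a) ω⟫_ℂ
    rw [mul_apply_eq_comp, ContinuousLinearMap.star_eq_adjoint,
      ContinuousLinearMap.adjoint_inner_right, inner_self_eq_norm_sq_to_K]
    norm_cast
    positivity
  · intro i
    rw [ContinuousLinearMap.isSelfAdjoint_iff_isSymmetric]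
    intro v w
    refine UniformSpace.Completion.induction_on₂ v w ?_ ?_
    · apply isClosed_eq
      · exact Continuous.inner ((Z i).continuous.comp continuous_fst) continuous_snd
      · exact Continuous.inner continuous_fst ((Z i).continuous.comp continuous_snd)
    · intro v w
      change ⟪Z i v, (w : UniformSpace.Completion V)⟫_ℂ = ⟪(v : UniformSpace.Completion V), Z i w⟫_ℂ
      rw [hZ, hZ, UniformSpace.Completion.inner_coe, UniformSpace.Completion.inner_coe, hX]
  · intro n w
    rw [momentSeries_eq, mom_distOf]
    have key : ∀ l : List (Fin k), (l.map Z).prod ω = ((act X Ω l : V) : UniformSpace.Completion V) := by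
      intro l
      induction l with
      | nil => simp [act, ω]
      | cons x l ih => rw [List.map_cons, List.prod_cons, mul_apply_eq_comp, ih, hZ]; rfl
    change _ = ⟪ω, (List.ofFn fun j => Z (w j)).prod ω⟫_ℂ
    have h2 : (List.ofFn fun j => Z (w j)) = (List.ofFn w).map Z := by
      rw [List.map_ofFn]; rfl
    rw [h2, key, UniformSpace.Completion.inner_coe]

end GNS

section DcIff
variable {k : ℕ}

/-- positivity and growth of a moment function -/
def MomOK (m : List (Fin k) → ℂ) : Prop :=
  m [] = 1 ∧ PD (fun u v => m (u.reverse ++ v)) ∧ ∃ C : ℝ, 1 ≤ C ∧ ∀ l, ‖m l‖ ≤ C ^ l.length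

lemma exists_Dc_of_momOK (m : List (Fin k) → ℂ) (hm : MomOK m) :
    ∃ μ : Dist k, IsDc μ ∧ ∀ l, mom μ l = m l := by
  obtain ⟨h1, hK, C, hC1, hC⟩ := hm
  let X : Fin k → (PV _ hK →ₗ[ℂ] PV _ hK) := fun i => pvLift hK fun l => dl hK (i :: l)
  have hX : ∀ i v w, ⟪X i v, w⟫_ℂ = ⟪v, X i w⟫_ℂ := by
    intro i v w
    apply pvLift_symm
    intro u v
    rw [inner_dl, inner_dl]; simp
  have hact : ∀ l, act X (dl hK []) l = dl hK l := by
    intro l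
    induction l with
    | nil => rfl
    | cons x l ih => rw [act, ih]; exact pvLift_dl _ _ _
  have hnorm : ∀ l, ‖dl hK l‖ ≤ C ^ l.length := by
    intro l
    have h2 : ‖dl hK l‖ ^ 2 = ‖m (l.reverse ++ l)‖ := by
      have := inner_dl hK l l
      rw [← this, inner_self_eq_norm_sq_to_K]; simp
    have h3 := hC (l.reverse ++ l)
    rw [← h2] at h3
    simp only [List.length_append, List.length_reverse, ← two_mul] at h3
    rw [mul_comm, pow_mul] at h3
    exact le_of_sq_le_sq h3 (by positivity)
  have hpow : ∀ i n l, (X i ^ n) (dl hK l) = dl hK (List.replicate n i ++ l) := by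
    intro i n l
    induction n with
    | zero => simp
    | succ n ih =>
      rw [pow_succ', Module.End.mul_apply, ih, List.replicate_succ]
      exact pvLift_dl _ _ _
  have hb : ∀ i v, ‖X i v‖ ≤ C * ‖v‖ := by
    intro i v
    refine bounded_of_growth (X i) (hX i) C (by linarith) v ?_
    induction v using pv_induction with
    | h0 => exact ⟨0, by simp⟩
    | hadd v w h1 h2 =>
      obtain ⟨a, ha⟩ := h1
      obtain ⟨b, hb⟩ := h2
      refine ⟨a + b, fun n => ?_⟩
      rw [map_add, add_mul]
      exact (norm_add_le _ _).trans (add_le_add (ha n) (hb n))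
    | hs c l =>
      refine ⟨‖c‖ * C ^ l.length, fun n => ?_⟩
      rw [map_smul, norm_smul, hpow, mul_assoc]
      refine mul_le_mul_of_nonneg_left ?_ (norm_nonneg _)
      refine (hnorm _).trans_eq ?_
      simp [pow_add]; ring
  refine ⟨distOf X (dl hK []), isDc_distOf X _ ?_ hX C hb, fun l => ?_⟩
  · rw [inner_dl]; simpa using h1
  · rw [mom_distOf, hact, inner_dl]; simp

lemma momOK_of_Dc (μ : Dist k) (hμ : IsDc μ) : MomOK (mom μ) := by
  obtain ⟨h1, A, i1, i2, i3, i4, i5, i6, φ, x, hφ1, hφ, hx, hm⟩ := hμ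
  let _ : CStarAlgebra A := { }
  let _ : PartialOrder A := CStarAlgebra.spectralOrder A
  have _ : StarOrderedRing A := CStarAlgebra.spectralOrderedRing A
  have hmom : ∀ l, mom μ l = φ ((l.map x).prod) := by
    intro l
    by_cases hl : l = []
    · subst hl
      simp only [mom, List.map_nil, List.prod_nil, hφ1]; exact h1
    · revert l
      rw [← forall_words]
      intro n w
      rw [← momentSeries_eq, hm, List.map_ofFn]; rfl
  have hpos : ∀ a : A, 0 ≤ a → 0 ≤ φ a := by
    intro a ha
    obtain ⟨b, rfl⟩ := CStarAlgebra.nonneg_iff_eq_star_mul_self.1 ha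
    exact hφ b
  let Φ : A →ₚ[ℂ] ℂ := PositiveLinearMap.mk₀ φ hpos
  have hΦ : ∀ a, Φ a = φ a := fun a => rfl
  obtain ⟨C, hC⟩ := PositiveLinearMap.exists_norm_apply_le Φ
  have hstar : ∀ u : List (Fin k), star ((u.map x).prod) = (u.reverse.map x).prod := by
    intro u
    induction u with
    | nil => simp
    | cons y u ih => simp [ih, (hx y).star_eq]
  refine ⟨by rw [hmom]; simpa using hφ1, ?_, ?_⟩
  · have := PD.gram (fun u : List (Fin k) => Φ.toPreGNS ((u.map x).prod))
    refine Eq.mp (congrArg _ ?_) this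
    funext u v
    rw [PositiveLinearMap.preGNS_inner_def]
    simp only [PositiveLinearMap.ofPreGNS_toPreGNS]
    rw [hstar, hΦ, hmom, List.map_append, List.prod_append]
  · obtain ⟨B, hB⟩ : ∃ B : ℝ, ∀ i, ‖x i‖ ≤ B := by
      refine ⟨∑ i, ‖x i‖, fun i => ?_⟩
      exact Finset.single_le_sum (f := fun i => ‖x i‖) (fun j _ => norm_nonneg _) (mem_univ i)
    set B' := max 1 B
    set C' := max 1 ((C : ℝ) * ‖(1 : A)‖)
    have hB1 : 1 ≤ B' := le_max_left _ _
    have hC1 : 1 ≤ C' := le_max_left _ _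
    have hprod : ∀ l : List (Fin k), ‖(l.map x).prod‖ ≤ ‖(1 : A)‖ * B' ^ l.length := by
      intro l
      induction l with
      | nil => simp
      | cons y l ih =>
        rw [List.map_cons, List.prod_cons, List.length_cons, pow_succ]
        refine (norm_mul_le _ _).trans ?_
        have h2 : ‖x y‖ ≤ B' := (hB y).trans (le_max_right _ _)
        calc ‖x y‖ * ‖(l.map x).prod‖ ≤ B' * (‖(1 : A)‖ * B' ^ l.length) := by gcongr
          _ = _ := by ring
    have hmul : 1 ≤ C' * B' := one_le_mul_of_one_le_of_one_le hC1 hB1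
    refine ⟨C' * B', hmul, fun l => ?_⟩
    by_cases hl : l = []
    · subst hl
      rw [hmom]; simp [hφ1]
    · have hlen : l.length ≠ 0 := by simpa using hl
      rw [hmom, ← hΦ]
      calc ‖Φ (l.map x).prod‖ ≤ C * ‖(l.map x).prod‖ := hC _
        _ ≤ C * (‖(1 : A)‖ * B' ^ l.length) := by gcongr; exact hprod l
        _ = (C * ‖(1 : A)‖) * B' ^ l.length := by ring
        _ ≤ C' * B' ^ l.length := by gcongr; exact le_max_right _ _
        _ ≤ C' ^ l.length * B' ^ l.length := by gcongr; exact le_self_pow₀ hC1 hlen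
        _ = _ := by rw [mul_pow]

end DcIff
end Positivity

section Main
open scoped InnerProductSpace
variable {k : ℕ}

/-- padded kernel of a function on words -/
def Pk (f : List (Fin k) → ℂ) (u v : List (Fin k)) : ℂ :=
  if u = [] ∨ v = [] then 0 else f (u.reverse ++ v)

lemma Pk_nil_left (f : List (Fin k) → ℂ) (v) : Pk f [] v = 0 := by simp [Pk]
lemma Pk_nil_right (f : List (Fin k) → ℂ) (v) : Pk f v [] = 0 := by simp [Pk]
lemma Pk_ne (f : List (Fin k) → ℂ) {u v} (hu : u ≠ []) (hv : v ≠ []) :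
    Pk f u v = f (u.reverse ++ v) := by simp [Pk, hu, hv]
lemma Pk_cons (f : List (Fin k) → ℂ) (x y u v) :
    Pk f (x :: u) (y :: v) = f ((x :: u).reverse ++ (y :: v)) := Pk_ne f (by simp) (by simp)

/-- the common description of both classes -/
def Good (f : List (Fin k) → ℂ) : Prop :=
  (∀ l, l ≠ [] → star (f l) = f l.reverse) ∧ PD (Pk f) ∧
    ∃ C : ℝ, 1 ≤ C ∧ ∀ l, l ≠ [] → ‖f l‖ ≤ C ^ l.length

lemma good_herm {f : List (Fin k) → ℂ} (h1 : ∀ x, star (f [x]) = f [x]) (h2 : PD (Pk f)) :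
    ∀ l, l ≠ [] → star (f l) = f l.reverse := by
  intro l hl
  rcases l with _ | ⟨x, _ | ⟨y, l⟩⟩
  · exact absurd rfl hl
  · simpa using h1 x
  · have := h2.symm' (y :: l) [x]
    rw [Pk_cons, Pk_cons] at this
    simpa using this

/-- growth in the inversion of convolution -/
lemma growth_inv {L : Type*} (G : L → List L → ℂ) (m : List L → ℂ) (C : ℝ) (hC1 : 1 ≤ C)
    (hm : ∀ l, ‖m l‖ ≤ C ^ l.length)
    (hG : ∀ x v, G x v = m (x :: v) - ∑ i ∈ range v.length, G x (v.take i) * m (v.drop i)) :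
    ∀ n x v, v.length = n → ‖G x v‖ ≤ (2 * C) ^ (n + 1) := by
  intro n
  induction n using Nat.strong_induction_on with
  | _ n ih =>
    intro x v hv
    have hb : ∀ i ∈ range v.length, ‖G x (v.take i) * m (v.drop i)‖ ≤ 2 ^ (i + 1) * C ^ (n + 1) := by
      intro i hi
      rw [Finset.mem_range] at hi
      rw [norm_mul]
      have h1 := ih i (by omega) x (v.take i) (by simp; omega)
      have h2 := hm (v.drop i)
      rw [List.length_drop, hv] at h2
      calc _ ≤ (2 * C) ^ (i + 1) * C ^ (n - i) := by gcongr
        _ = 2 ^ (i + 1) * C ^ ((i + 1) + (n - i)) := by rw [mul_pow, pow_add C]; ring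
        _ = _ := by congr 2; omega
    have hs : ∑ i ∈ range v.length, (2:ℝ) ^ (i + 1) * C ^ (n + 1) =
        (2 ^ (n + 1) - 2) * C ^ (n + 1) := by
      rw [← Finset.sum_mul, hv]
      congr 1
      clear * -
      induction n with
      | zero => simp
      | succ n ih => rw [Finset.sum_range_succ, ih]; ring
    rw [hG]
    refine (norm_sub_le _ _).trans ?_
    have h3 := hm (x :: v)
    rw [List.length_cons, hv] at h3
    have h4 := (norm_sum_le _ _).trans (Finset.sum_le_sum hb)
    rw [hs] at h4
    have h5 : 0 ≤ C ^ (n + 1) := by positivity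
    rw [mul_pow]
    nlinarith

lemma growth_b {L : Type*} (f : List L → ℂ) (C : ℝ) (hC1 : 1 ≤ C)
    (hf : ∀ l, l ≠ [] → ‖f l‖ ≤ C ^ l.length) :
    ∀ n v, v.length = n → ‖bW f v‖ ≤ (2 * C) ^ n := by
  intro n
  induction n using Nat.strong_induction_on with
  | _ n ih =>
    intro v hv
    cases v with
    | nil => simp at hv; subst hv; simp [b_nil]
    | cons x v =>
      simp only [List.length_cons] at hv
      rw [b_cons]
      have hb : ∀ i ∈ range (v.length + 1), ‖f (x :: v.take i) * bW f (v.drop i)‖ ≤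
          2 ^ (v.length - i) * C ^ n := by
        intro i hi
        rw [Finset.mem_range] at hi
        rw [norm_mul]
        have h1 := hf (x :: v.take i) (by simp)
        have h2 := ih (v.length - i) (by omega) (v.drop i) (by simp)
        have h3 : (x :: v.take i).length = i + 1 := by simp; omega
        rw [h3] at h1
        calc _ ≤ C ^ (i + 1) * (2 * C) ^ (v.length - i) := by gcongr
          _ = 2 ^ (v.length - i) * C ^ ((i + 1) + (v.length - i)) := by rw [mul_pow, pow_add C]; ring
          _ = _ := by congr 2; omega
      refine ((norm_sum_le _ _).trans (Finset.sum_le_sum hb)).trans ?_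
      rw [← Finset.sum_mul, mul_pow]
      have hs : ∑ i ∈ range (v.length + 1), (2:ℝ) ^ (v.length - i) ≤ 2 ^ n := by
        have h6 := Finset.sum_range_reflect (fun i => (2:ℝ) ^ i) (v.length + 1)
        have h7 : ∑ i ∈ range (v.length + 1), (2:ℝ) ^ (v.length - i) =
            ∑ i ∈ range (v.length + 1), (2:ℝ) ^ i := by
          rw [← h6]
          refine Finset.sum_congr rfl fun i hi => ?_
          congr 1
        rw [h7, ← hv, geom_sum_eq (by norm_num)]
        norm_num
      gcongr

/-- auxiliary numbers -/
def qN (f m : List (Fin k) → ℂ) : List (Fin k) → List (Fin k) → ℂ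
  | l, [] => m l
  | l, x :: v => qN f m (l ++ [x]) v - f (x :: v) * m l
termination_by _ v => v

lemma qN_aux (f : List (Fin k) → ℂ) (v : List (Fin k)) (hv : v ≠ []) :
    qN f (bW f) [] v = 0 ∧ ∀ y l, qN f (bW f) (y :: l) v =
      (∑ i ∈ range (l.length + 1), f (y :: l.take i) * qN f (bW f) (l.drop i) v) + f (y :: l ++ v) := by
  induction v with
  | nil => exact absurd rfl hv
  | cons x v ih =>
    have hB : ∀ (l : List (Fin k)) (i : ℕ), i < l.length + 1 →
        (l ++ [x]).take i = l.take i ∧ (l ++ [x]).drop i = l.drop i ++ [x] := by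
      intro l i hi
      exact ⟨List.take_append_of_le_length (by omega), List.drop_append_of_le_length (by omega)⟩
    by_cases hv' : v = []
    · subst hv'
      constructor
      · simp [qN, b_cons, b_nil]
      · intro y l
        simp only [qN, List.cons_append]
        rw [b_cons, b_cons, List.length_append, List.length_singleton, Finset.sum_range_succ]
        rw [Finset.mul_sum, add_sub_right_comm, ← Finset.sum_sub_distrib]
        congr 1
        · refine Finset.sum_congr rfl fun i hi => ?_
          rw [Finset.mem_range] at hi
          rw [(hB l i hi).1, (hB l i hi).2]; ring
        · rw [List.take_of_length_le (by simp), List.drop_of_length_le (by simp), b_nil, mul_one]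
    · obtain ⟨i1, i2⟩ := ih hv'
      constructor
      · rw [qN, List.nil_append, i2]
        simp [i1, b_nil]
      · intro y l
        rw [qN, List.cons_append, i2, List.length_append, List.length_singleton,
          Finset.sum_range_succ, b_cons]
        rw [List.take_of_length_le (by simp), List.drop_of_length_le (by simp), i1, mul_zero,
          add_zero, Finset.mul_sum, add_sub_right_comm, ← Finset.sum_sub_distrib]
        congr 1
        · refine Finset.sum_congr rfl fun i hi => ?_
          rw [Finset.mem_range] at hi
          rw [(hB l i hi).1, (hB l i hi).2, qN]; ring
        · simp

/-- vectors attached to words -/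
noncomputable def Wv {V : Type*} [AddCommGroup V] [Module ℂ V] (X : Fin k → (V →ₗ[ℂ] V)) (Ω : V)
    (f : List (Fin k) → ℂ) : List (Fin k) → V
  | [] => Ω
  | x :: v => X x (Wv X Ω f v) - f (x :: v) • Ω

lemma good_of_b (f : List (Fin k) → ℂ) (hm : MomOK (bW f)) : Good f := by
  obtain ⟨-, hK, C, hC1, hC⟩ := hm
  let X : Fin k → (PV _ hK →ₗ[ℂ] PV _ hK) := fun i => pvLift hK fun l => dl hK (i :: l)
  have hX : ∀ i v w, ⟪X i v, w⟫_ℂ = ⟪v, X i w⟫_ℂ := by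
    intro i v w
    apply pvLift_symm
    intro u v
    rw [inner_dl, inner_dl]; simp
  have hXd : ∀ i l, X i (dl hK l) = dl hK (i :: l) := fun i l => pvLift_dl _ _ _
  let Ω := dl hK []
  let W := Wv X Ω f
  have hq : ∀ v l, ⟪dl hK l.reverse, W v⟫_ℂ = qN f (bW f) l v := by
    intro v
    induction v with
    | nil =>
      intro l
      change ⟪dl hK l.reverse, dl hK []⟫_ℂ = _
      rw [inner_dl, qN]; simp
    | cons x v ih =>
      intro l
      change ⟪dl hK l.reverse, X x (W v) - f (x :: v) • dl hK []⟫_ℂ = _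
      rw [inner_sub_right, ← hX, hXd, inner_smul_right, inner_dl, qN, ← ih]
      simp
  have h0 : ∀ v, v ≠ [] → ⟪Ω, W v⟫_ℂ = 0 := by
    intro v hv
    have := hq v []
    rw [(qN_aux f v hv).1] at this
    exact this
  have hΩ : ⟪Ω, Ω⟫_ℂ = 1 := by
    change ⟪dl hK [], dl hK []⟫_ℂ = _
    rw [inner_dl]; simp [b_nil]
  have hW : ∀ u v, u ≠ [] → v ≠ [] → ⟪W u, W v⟫_ℂ = f (u.reverse ++ v) := by
    intro u
    induction u with
    | nil => intro v h; exact absurd rfl h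
    | cons y u ih =>
      intro v _ hv
      have h1 : ⟪W (y :: u), W v⟫_ℂ = ⟪W u, W (y :: v)⟫_ℂ + f (y :: v) * ⟪W u, Ω⟫_ℂ := by
        change ⟪X y (W u) - f (y :: u) • Ω, W v⟫_ℂ = ⟪W u, X y (W v) - f (y :: v) • Ω⟫_ℂ + _
        rw [inner_sub_left, inner_sub_right, hX, inner_smul_left, inner_smul_right, h0 v hv]
        ring
      rw [h1]
      by_cases hu : u = []
      · subst hu
        change ⟪Ω, W (y :: v)⟫_ℂ + f (y :: v) * ⟪Ω, Ω⟫_ℂ = _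
        rw [h0 _ (by simp), hΩ]; simp
      · rw [ih (y :: v) hu (by simp), ← inner_conj_symm, h0 u hu]; simp
  have hP : PD (Pk f) := by
    have := PD.gram (fun u => if u = [] then 0 else W u)
    refine Eq.mp (congrArg _ ?_) this
    funext u v
    by_cases hu : u = []
    · simp [hu, Pk]
    · by_cases hv : v = []
      · simp [hv, Pk]
      · rw [Pk_ne f hu hv, if_neg hu, if_neg hv, hW u v hu hv]
  refine ⟨good_herm ?_ hP, hP, 2 * C, by linarith, ?_⟩
  · intro x
    have h1 : f [x] = bW f [x] := by simp [b_cons, b_nil]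
    rw [h1]
    have := hK.symm' [] [x]
    simpa using this
  · intro l hl
    cases l with
    | nil => exact absurd rfl hl
    | cons x v =>
      exact growth_inv (fun x v => f (x :: v)) (bW f) C hC1 hC (fun x v => b_inv f x v) _ x v rfl

lemma b_of_good (f : List (Fin k) → ℂ) (hf : Good f) : MomOK (bW f) := by
  obtain ⟨hh, hP, C, hC1, hC⟩ := hf
  let K : List (Fin k) → List (Fin k) → ℂ := fun u v =>
    star (if u = [] then (1:ℂ) else 0) * (if v = [] then (1:ℂ) else 0) + Pk f u v
  have hK : PD K := (PD.ind _).add' hP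
  let X : Fin k → (PV _ hK →ₗ[ℂ] PV _ hK) := fun i => pvLift hK fun l =>
    f (i :: l) • dl hK [] + dl hK (i :: l)
  have hX : ∀ i v w, ⟪X i v, w⟫_ℂ = ⟪v, X i w⟫_ℂ := by
    intro i v w
    apply pvLift_symm
    intro u v
    rw [inner_add_left, inner_add_right, inner_smul_left, inner_smul_right, inner_dl, inner_dl,
      inner_dl, inner_dl]
    have h1 := hh (i :: u) (by simp)
    simp only [Complex.star_def] at h1
    rw [h1]
    cases u <;> cases v <;> simp [K, Pk]
  let Ω := dl hK []
  have hact : ∀ l, act X Ω l = ∑ i ∈ range (l.length + 1), bW f (l.drop i) • dl hK (l.take i) := by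
    intro l
    induction l with
    | nil => simp [act, Ω, b_nil]
    | cons x l ih =>
      rw [act, ih, map_sum, List.length_cons, Finset.sum_range_succ' _ (l.length + 1)]
      simp only [map_smul, List.drop_succ_cons, List.take_succ_cons, List.drop_zero, List.take_zero]
      rw [b_cons, Finset.sum_smul, ← Finset.sum_add_distrib]
      refine Finset.sum_congr rfl fun i _ => ?_
      change bW f (l.drop i) • pvLift hK _ (dl hK (l.take i)) = _
      rw [pvLift_dl, smul_add, smul_smul, mul_comm, add_comm]
  have hb : ∀ l, ⟪Ω, act X Ω l⟫_ℂ = bW f l := by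
    intro l
    rw [hact, inner_sum, Finset.sum_eq_single 0]
    · rw [inner_smul_right, inner_dl]; simp [K, Pk]
    · intro i hi h0
      rw [inner_smul_right, inner_dl]
      rw [Finset.mem_range] at hi
      have : l.take i ≠ [] := by
        intro h
        have h2 := congrArg List.length h
        cases l with
        | nil => simp at hi; exact h0 hi
        | cons y l => cases i <;> simp at h h0
      simp [K, Pk, this]
    · simp
  refine ⟨b_nil f, ?_, 2 * C, by linarith, fun l => growth_b f C hC1 hC _ l rfl⟩
  have := PD.gram (act X Ω)
  refine Eq.mp (congrArg _ ?_) this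
  funext u v
  rw [act_sym X Ω hX, hb]

end Main

section Free
open scoped InnerProductSpace
variable {k : ℕ}

/-- Fock kernel -/
def FK (f : List (Fin k) → ℂ) : List (List (Fin k)) → List (List (Fin k)) → ℂ
  | [], [] => 1
  | u :: s, v :: t => Pk f u v * FK f s t
  | _, _ => 0

/-- depth-truncated Fock kernel -/
def FKn (f : List (Fin k) → ℂ) : ℕ → List (List (Fin k)) → List (List (Fin k)) → ℂ
  | 0, s, t => star (if s = [] then (1:ℂ) else 0) * (if t = [] then (1:ℂ) else 0)
  | n+1, s, t => star (if s = [] then (1:ℂ) else 0) * (if t = [] then (1:ℂ) else 0) +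
      Pk f (s.headD []) (t.headD []) * FKn f n s.tail t.tail

lemma FKn_PD (f : List (Fin k) → ℂ) (hf : PD (Pk f)) (n : ℕ) : PD (FKn f n) := by
  induction n with
  | zero => exact PD.ind _
  | succ n ih =>
    exact (PD.ind _).add' ((hf.pull (fun s : List (List (Fin k)) => s.headD [])).mul
      (ih.pull List.tail))

lemma FKn_eq (f : List (Fin k) → ℂ) (n : ℕ) : ∀ s t, s.length ≤ n → t.length ≤ n →
    FKn f n s t = FK f s t := by
  induction n with
  | zero =>
    intro s t hs ht
    have h1 : s = [] := List.length_eq_zero_iff.1 (by omega)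
    have h2 : t = [] := List.length_eq_zero_iff.1 (by omega)
    subst h1; subst h2; simp [FKn, FK]
  | succ n ih =>
    intro s t hs ht
    cases s with
    | nil =>
      cases t with
      | nil => simp [FKn, FK, Pk]
      | cons v t => simp [FKn, FK, Pk]
    | cons u s =>
      cases t with
      | nil => simp [FKn, FK, Pk]
      | cons v t =>
        simp only [List.length_cons] at hs ht
        simp [FKn, FK, ih s t (by omega) (by omega)]

lemma FK_PD (f : List (Fin k) → ℂ) (hf : PD (Pk f)) : PD (FK f) := by
  refine PD.mk' ?_ ?_
  · intro s t
    rw [← FKn_eq f (s.length + t.length) s t (by omega) (by omega),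
      ← FKn_eq f (s.length + t.length) t s (by omega) (by omega)]
    exact (FKn_PD f hf _).symm' s t
  · intro x
    have := (FKn_PD f hf (x.support.sup List.length)).nn x
    refine this.trans_eq ?_
    simp only [Finsupp.sum]
    refine Finset.sum_congr rfl fun s hs => Finset.sum_congr rfl fun t ht => ?_
    rw [FKn_eq]
    · exact Finset.le_sup (f := List.length) hs
    · exact Finset.le_sup (f := List.length) ht

lemma growth_e (f : List (Fin k) → ℂ) (C : ℝ) (hC1 : 1 ≤ C)
    (hf : ∀ l, l ≠ [] → ‖f l‖ ≤ C ^ l.length) (v : List (Fin k)) :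
    ∀ s : List (List (Fin k)), ‖eW f s v‖ ≤ 4 ^ v.length * C ^ (v.length + (s.map List.length).sum) := by
  induction v with
  | nil =>
    intro s
    cases s with
    | nil => simp [e_nil_nil]
    | cons u s => rw [e_cons_nil, norm_zero]; positivity
  | cons x v ih =>
    intro s
    have hx := hf [x] (by simp)
    simp only [List.length_singleton, pow_one] at hx
    cases s with
    | nil =>
      rw [eW]
      have h1 := ih []
      have h2 := ih [[x]]
      simp only [List.map_nil, List.sum_nil, List.map_cons, List.sum_cons, List.length_cons,
        List.length_nil, add_zero, zero_add] at h1 h2 ⊢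
      have h3 : ‖f [x] * eW f [] v‖ ≤ C * (4 ^ v.length * C ^ v.length) := by
        rw [norm_mul]; gcongr
      have h4 : 0 ≤ (4:ℝ) ^ v.length * C ^ (v.length + 1) := by positivity
      calc _ ≤ _ := norm_add_le _ _
        _ ≤ C * (4 ^ v.length * C ^ v.length) + 4 ^ v.length * C ^ (v.length + 1) := add_le_add h3 h2
        _ = 2 * (4 ^ v.length * C ^ (v.length + 1)) := by ring
        _ ≤ 4 * (4 ^ v.length * C ^ (v.length + 1)) := by linarith
        _ = _ := by ring
    | cons u s =>
      rw [eW]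
      have h1 := ih (u :: s)
      have h2 := ih ([x] :: u :: s)
      have h3 := ih ((u ++ [x]) :: s)
      have h4 := ih s
      have h5 := hf (u ++ [x]) (by simp)
      simp only [List.map_cons, List.sum_cons, List.length_cons, List.length_append,
        List.length_nil, zero_add] at h1 h2 h3 h4 h5 ⊢
      set T := (s.map List.length).sum
      have h6 : ‖f [x] * eW f (u :: s) v‖ ≤ C * (4 ^ v.length * C ^ (v.length + (u.length + T))) := by
        rw [norm_mul]; gcongr
      have h7 : ‖f (u ++ [x]) * eW f s v‖ ≤ C ^ (u.length + 1) * (4 ^ v.length * C ^ (v.length + T)) := by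
        rw [norm_mul]; gcongr
      calc _ ≤ _ := norm_add₄_le
        _ ≤ C * (4 ^ v.length * C ^ (v.length + (u.length + T))) +
            4 ^ v.length * C ^ (v.length + (1 + (u.length + T))) +
            4 ^ v.length * C ^ (v.length + (u.length + 1 + T)) +
            C ^ (u.length + 1) * (4 ^ v.length * C ^ (v.length + T)) := by gcongr
        _ = _ := by ring

/-- field operator on the Fock space -/
noncomputable def fockT (f : List (Fin k) → ℂ) {K : List (List (Fin k)) → List (List (Fin k)) → ℂ}
    (hK : PD K) (x : Fin k) : List (List (Fin k)) → PV K hK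
  | [] => f [x] • dl hK [] + dl hK [[x]]
  | u :: s => f [x] • dl hK (u :: s) + dl hK ([x] :: u :: s) +
      (if u = [] then 0 else dl hK ((x :: u) :: s)) +
      (if u = [] then 0 else f (x :: u) • dl hK s)

lemma e_of_good (f : List (Fin k) → ℂ) (hf : Good f) : MomOK (eW f []) := by
  obtain ⟨hh, hP, C, hC1, hC⟩ := hf
  have hK := FK_PD f hP
  let X : Fin k → (PV _ hK →ₗ[ℂ] PV _ hK) := fun i => pvLift hK (fockT f hK i)
  have hh' : ∀ l, l ≠ [] → (starRingEnd ℂ) (f l) = f l.reverse := hh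
  have hX : ∀ i v w, ⟪X i v, w⟫_ℂ = ⟪v, X i w⟫_ℂ := by
    intro i v w
    apply pvLift_symm
    intro s t
    rcases s with _ | ⟨u, s⟩ <;> rcases t with _ | ⟨v, t⟩
    · simp [fockT, inner_add_left, inner_add_right, inner_smul_left, inner_smul_right, inner_dl, hh', FK]
    · rcases v with _ | ⟨y, v⟩
      · simp [fockT, inner_add_left, inner_add_right, inner_smul_left, inner_smul_right, inner_dl, hh', FK, Pk]
      · simp [fockT, inner_add_left, inner_add_right, inner_smul_left, inner_smul_right, inner_dl, hh', FK, Pk]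
    · rcases u with _ | ⟨y, u⟩
      · simp [fockT, inner_add_left, inner_add_right, inner_smul_left, inner_smul_right, inner_dl, hh', FK, Pk]
      · simp [fockT, inner_add_left, inner_add_right, inner_smul_left, inner_smul_right, inner_dl, hh', FK, Pk]
    · rcases u with _ | ⟨y, u⟩ <;> rcases v with _ | ⟨z, v⟩
      · simp [fockT, inner_add_left, inner_add_right, inner_smul_left, inner_smul_right, inner_dl, hh', FK, Pk]
      · simp [fockT, inner_add_left, inner_add_right, inner_smul_left, inner_smul_right, inner_dl, hh', FK, Pk]
      · simp [fockT, inner_add_left, inner_add_right, inner_smul_left, inner_smul_right, inner_dl, hh', FK, Pk]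
      · simp [fockT, inner_add_left, inner_add_right, inner_smul_left, inner_smul_right, inner_dl, hh', FK, Pk]
        ring
  let Ω := dl hK []
  have he : ∀ v s, (∀ u ∈ s, u ≠ []) → ⟪dl hK s, act X Ω v⟫_ℂ = eW f (s.map List.reverse) v := by
    intro v
    induction v with
    | nil =>
      intro s hs
      rw [act, inner_dl]
      cases s <;> simp [FK, e_nil_nil, e_cons_nil]
    | cons x v ih =>
      intro s hs
      rw [act, ← hX]
      change ⟪pvLift hK _ (dl hK s), _⟫_ℂ = _
      rw [pvLift_dl]
      cases s with
      | nil =>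
        simp only [fockT, inner_add_left, inner_smul_left]
        rw [ih [] (by simp), ih [[x]] (by simp), hh' _ (by simp)]
        simp [eW]
      | cons u s =>
        have hu : u ≠ [] := hs u (by simp)
        have hs' : ∀ u ∈ s, u ≠ [] := fun w hw => hs w (by simp [hw])
        simp only [fockT, if_neg hu, inner_add_left, inner_smul_left]
        rw [ih _ hs, ih _ hs', ih ([x] :: u :: s) (by simpa [hu] using hs'),
          ih ((x :: u) :: s) (by simpa [hu] using hs'), hh' _ (by simp), hh' _ (by simp)]
        simp [eW]
  have hb : ∀ l, ⟪Ω, act X Ω l⟫_ℂ = eW f [] l := fun l => he l [] (by simp)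
  refine ⟨e_nil_nil f, ?_, 4 * C, by linarith, fun l => ?_⟩
  · have := PD.gram (act X Ω)
    refine Eq.mp (congrArg _ ?_) this
    funext u v
    rw [act_sym X Ω hX, hb]
  · have := growth_e f C hC1 hC l []
    rw [mul_pow]
    simpa using this

/-- rescaled walk -/
def EW (f : List (Fin k) → ℂ) (ε : ℂ) : List (List (Fin k)) → List (Fin k) → ℂ
  | [], [] => 1
  | _ :: _, [] => 0
  | [], x :: v => ε * (f [x] * EW f ε [] v + EW f ε [[x]] v)
  | u :: s, x :: v => ε * (f [x] * EW f ε (u :: s) v + EW f ε ([x] :: u :: s) v)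
      + EW f ε ((u ++ [x]) :: s) v + f (u ++ [x]) * EW f ε s v
termination_by _ v => v

lemma EW_cont (f : List (Fin k) → ℂ) (v : List (Fin k)) : ∀ s, Continuous fun ε => EW f ε s v := by
  induction v with
  | nil => intro s; cases s <;> simp only [EW] <;> fun_prop
  | cons x v ih =>
    intro s
    cases s with
    | nil =>
      have h1 := ih []
      have h2 := ih [[x]]
      simp only [EW]; fun_prop
    | cons u s =>
      have h1 := ih (u :: s)
      have h2 := ih ([x] :: u :: s)
      have h3 := ih ((u ++ [x]) :: s)
      have h4 := ih s
      simp only [EW]; fun_prop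

lemma EW_eq (f : List (Fin k) → ℂ) (ε : ℂ) (v : List (Fin k)) :
    ∀ s, eW (fun l => ε * f l) s v = ε ^ s.length * EW f ε s v := by
  induction v with
  | nil => intro s; cases s <;> simp [EW, eW]
  | cons x v ih =>
    intro s
    cases s with
    | nil => simp only [EW, eW, ih]; simp; ring
    | cons u s => simp only [EW, eW, ih, List.length_cons]; ring

lemma EW_zero_nil (f : List (Fin k) → ℂ) (v : List (Fin k)) (hv : v ≠ []) : EW f 0 [] v = 0 := by
  cases v with
  | nil => exact absurd rfl hv
  | cons x v => simp [EW]

lemma EW_zero (f : List (Fin k) → ℂ) (v : List (Fin k)) : ∀ u,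
    EW f 0 [u] v + f u * EW f 0 [] v = f (u ++ v) := by
  induction v with
  | nil => intro u; simp [EW]
  | cons x v ih =>
    intro u
    have := ih (u ++ [x])
    rw [EW_zero_nil f (x :: v) (by simp), EW]
    simpa using this

lemma lim_e (f : List (Fin k) → ℂ) (l : List (Fin k)) (hl : l ≠ []) :
    Filter.Tendsto (fun N : ℕ => (N : ℂ) * eW (fun l => (N : ℂ)⁻¹ * f l) [] l) Filter.atTop
      (nhds (f l)) := by
  cases l with
  | nil => exact absurd rfl hl
  | cons x v =>
    have h1 : Filter.Tendsto (fun N : ℕ => EW f ((N : ℂ)⁻¹) [[x]] v + f [x] * EW f ((N : ℂ)⁻¹) [] v)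
        Filter.atTop (nhds (f ([x] ++ v))) := by
      rw [← EW_zero f v [x]]
      have hc : Continuous fun ε => EW f ε [[x]] v + f [x] * EW f ε [] v := by
        have := EW_cont f v [[x]]
        have := EW_cont f v []
        fun_prop
      exact (hc.tendsto 0).comp (tendsto_inv_atTop_nhds_zero_nat (𝕜 := ℂ))
    refine h1.congr' ?_
    filter_upwards [Filter.eventually_ge_atTop 1] with N hN
    have hN0 : (N : ℂ) ≠ 0 := by exact_mod_cast (by omega : N ≠ 0)
    rw [EW_eq, EW]
    simp only [List.length_nil, pow_zero, one_mul]
    field_simp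
    ring

lemma e_congr {f f' : List (Fin k) → ℂ} (hff : ∀ l, l ≠ [] → f l = f' l) (v : List (Fin k)) :
    ∀ s, eW f s v = eW f' s v := by
  induction v with
  | nil => intro s; cases s <;> simp [eW]
  | cons x v ih =>
    intro s
    cases s with
    | nil => simp only [eW, ih, hff [x] (by simp)]
    | cons u s => simp only [eW, ih, hff [x] (by simp), hff (u ++ [x]) (by simp)]

lemma h_unique {f f' : List (Fin k) → ℂ} (hff : ∀ l, eW f [] l = eW f' [] l) :
    ∀ n x v, v.length = n → hW f [x] v = hW f' [x] v := by
  intro n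
  induction n using Nat.strong_induction_on with
  | _ n ih =>
    intro x v hv
    rw [h_inv, h_inv, hff]
    congr 1
    refine Finset.sum_congr rfl fun i hi => ?_
    rw [Finset.mem_range] at hi
    rw [ih i (by omega) x (v.take i) (by simp; omega), hff]

lemma f_unique {f f' : List (Fin k) → ℂ} (hff : ∀ l, eW f [] l = eW f' [] l) (u : List (Fin k))
    (hu : u ≠ []) : f u = f' u := by
  have key : ∀ u : List (Fin k), u ≠ [] → ∀ v, SW f u v = SW f' u v := by
    intro u
    induction u using List.reverseRecOn with
    | nil => intro h; exact absurd rfl h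
    | append_singleton u x ih =>
      intro _ v
      by_cases hu : u = []
      · subst hu
        rw [List.nil_append, ← e_nil_cons, ← e_nil_cons, hff]
      · rw [S_inv, S_inv, ih hu]
        congr 1
        refine Finset.sum_congr rfl fun i hi => ?_
        rw [h_unique hff _ x _ rfl, ih hu]
  have := key u hu []
  rwa [S_nil, S_nil] at this

lemma growth_f (f : List (Fin k) → ℂ) (C : ℝ) (hC1 : 1 ≤ C)
    (hm : ∀ l, ‖eW f [] l‖ ≤ C ^ l.length) (u : List (Fin k)) (hu : u ≠ []) :
    ‖f u‖ ≤ (8 * C) ^ u.length := by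
  have hh : ∀ x v, ‖hW f [x] v‖ ≤ (2 * C) ^ (v.length + 1) := fun x v =>
    growth_inv (fun x v => hW f [x] v) (eW f []) C hC1 hm (fun x v => h_inv f x v) _ x v rfl
  have key : ∀ u : List (Fin k), u ≠ [] → ∀ v,
      ‖SW f u v‖ ≤ 2 ^ u.length * (4 * C) ^ (u.length + v.length) := by
    intro u
    induction u using List.reverseRecOn with
    | nil => intro h; exact absurd rfl h
    | append_singleton u x ih =>
      intro _ v
      by_cases hu : u = []
      · subst hu
        rw [List.nil_append, ← e_nil_cons]
        refine (hm _).trans ?_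
        simp only [List.length_cons, List.length_nil, zero_add, pow_one]
        have h1 : C ^ (v.length + 1) ≤ (4 * C) ^ (v.length + 1) := by gcongr; linarith
        have h2 : 0 ≤ (4 * C) ^ (v.length + 1) := by positivity
        rw [add_comm 1]
        linarith
      · have hb : ∀ i ∈ range (v.length + 1), ‖hW f [x] (v.take i) * SW f u (v.drop i)‖ ≤
            (1/2) ^ (i + 1) * (2 ^ u.length * (4 * C) ^ (u.length + v.length + 1)) := by
          intro i hi
          rw [Finset.mem_range] at hi
          have h1 := hh x (v.take i)
          have h2 := ih hu (v.drop i)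
          rw [List.length_take, min_eq_left (by omega)] at h1
          rw [List.length_drop] at h2
          rw [norm_mul]
          calc _ ≤ (2 * C) ^ (i + 1) * (2 ^ u.length * (4 * C) ^ (u.length + (v.length - i))) := by gcongr
            _ = (1/2) ^ (i + 1) * (2 ^ u.length * (4 * C) ^ ((i + 1) + (u.length + (v.length - i)))) := by
              rw [pow_add (4 * C) (i + 1), show 2 * C = (1/2) * (4 * C) by ring, mul_pow (1/2)]; ring
            _ = _ := by congr 3; omega
        have h3 := (norm_sum_le _ _).trans (Finset.sum_le_sum hb)
        have hs : ∑ i ∈ range (v.length + 1), ((1:ℝ)/2) ^ (i + 1) ≤ 1 := by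
          have : ∀ n : ℕ, ∑ i ∈ range n, ((1:ℝ)/2) ^ (i + 1) = 1 - (1/2) ^ n := by
            intro n
            induction n with
            | zero => simp
            | succ n ih => rw [Finset.sum_range_succ, ih]; ring
          rw [this]
          have : (0:ℝ) ≤ (1/2) ^ (v.length + 1) := by positivity
          linarith
        rw [← Finset.sum_mul] at h3
        have h4 := ih hu (x :: v)
        have h5 : 0 ≤ (2:ℝ) ^ u.length * (4 * C) ^ (u.length + v.length + 1) := by positivity
        rw [S_inv]
        refine (norm_sub_le _ _).trans ?_
        rw [List.length_cons, ← add_assoc] at h4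
        rw [List.length_append, List.length_singleton, add_right_comm, pow_succ 2]
        nlinarith
  have := key u hu []
  rw [S_nil, List.length_nil, add_zero, ← mul_pow] at this
  refine this.trans_eq ?_
  congr 1; ring

lemma good_of_e (f : List (Fin k) → ℂ) (hm : MomOK (eW f []))
    (hN : ∀ N : ℕ, 0 < N → MomOK (eW (fun l => (N : ℂ)⁻¹ * f l) [])) : Good f := by
  obtain ⟨-, -, C, hC1, hC⟩ := hm
  have hlim := lim_e f
  set mN : ℕ → List (Fin k) → ℂ := fun N => eW (fun l => (N : ℂ)⁻¹ * f l) [] with hmN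
  have hsym : ∀ N, 0 < N → ∀ l, star (mN N l) = mN N l.reverse := by
    intro N h l
    have := (hN N h).2.1.symm' l []
    simpa [hmN] using this
  have hherm : ∀ l, l ≠ [] → star (f l) = f l.reverse := by
    intro l hl
    have h1 := (hlim l hl).star
    have h2 := hlim l.reverse (by simpa using hl)
    refine tendsto_nhds_unique h1 (h2.congr' ?_)
    filter_upwards [Filter.eventually_ge_atTop 1] with N hN'
    have := hsym N hN' l
    rw [star_mul', this]
    simp [hmN]
  refine ⟨hherm, ?_, 8 * C, by linarith, growth_f f C hC1 hC⟩
  refine PD.mk' ?_ ?_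
  · intro u v
    by_cases hu : u = []
    · simp [Pk, hu]
    · by_cases hv : v = []
      · simp [Pk, hv]
      · rw [Pk_ne f hu hv, Pk_ne f hv hu, hherm _ (by simp [hu])]
        simp
  · intro x
    have hK : ∀ N : ℕ, 0 < N → PD (fun u v => (N : ℂ) * Pk (mN N) u v) := by
      intro N h
      have h1 := (hN N h).2.1.mul (PD.ind fun u : List (Fin k) => if u = [] then (0:ℂ) else 1)
      have h2 := h1.mul (PD.ind fun u : List (Fin k) => ((Real.sqrt (N : ℝ) : ℝ) : ℂ))
      refine Eq.mp (congrArg _ ?_) h2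
      funext u v
      have h3 : ((Real.sqrt (N : ℝ) : ℝ) : ℂ) * ((Real.sqrt (N : ℝ) : ℝ) : ℂ) = N := by
        rw [← Complex.ofReal_mul, Real.mul_self_sqrt (by positivity)]; simp
      by_cases hu : u = []
      · simp [Pk, hu]
      · by_cases hv : v = []
        · simp [Pk, hv]
        · simp [Pk, hu, hv, h3, hmN, mul_comm]
    have hlimP : ∀ u v, Filter.Tendsto (fun N : ℕ => (N : ℂ) * Pk (mN N) u v) Filter.atTop
        (nhds (Pk f u v)) := by
      intro u v
      by_cases hu : u = []
      · simp [Pk, hu]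
      · by_cases hv : v = []
        · simp [Pk, hv]
        · simp only [Pk_ne _ hu hv]
          exact hlim _ (by simp [hu])
    have ht : Filter.Tendsto (fun N : ℕ => x.sum fun i a => x.sum fun j b =>
        star a * ((N : ℂ) * Pk (mN N) i j) * b) Filter.atTop
        (nhds (x.sum fun i a => x.sum fun j b => star a * Pk f i j * b)) := by
      simp only [Finsupp.sum]
      refine tendsto_finsetSum _ fun i _ => tendsto_finsetSum _ fun j _ => ?_
      exact ((hlimP i j).const_mul _).mul_const _
    refine ge_of_tendsto ht ?_
    filter_upwards [Filter.eventually_ge_atTop 1] with N hN'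
    exact (hK N hN').nn x

end Free

section Final
variable {k : ℕ}

lemma fL_smul (f : NCSeries k) (c : ℂ) : ∀ l, l ≠ [] →
    fL (fun n w => c * f n w) l = c * fL f l := by
  refine forall_words.1 ?_
  intro n w
  rw [fL_ofFn, fL_ofFn]

lemma good_smul {f g : List (Fin k) → ℂ} (hf : Good f) (N : ℕ) (hN : 0 < N)
    (hg : ∀ l, l ≠ [] → g l = (N : ℂ)⁻¹ * f l) : Good g := by
  obtain ⟨h1, h2, C, hC1, hC⟩ := hf
  refine ⟨?_, ?_, C, hC1, ?_⟩
  · intro l hl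
    rw [hg l hl, hg _ (by simpa using hl), ← h1 l hl]
    simp
  · have h3 := h2.mul (PD.ind fun _ : List (Fin k) => ((Real.sqrt ((N : ℝ)⁻¹) : ℝ) : ℂ))
    refine Eq.mp (congrArg _ ?_) h3
    funext u v
    have h4 : ((Real.sqrt ((N : ℝ)⁻¹) : ℝ) : ℂ) * ((Real.sqrt ((N : ℝ)⁻¹) : ℝ) : ℂ) = (N : ℂ)⁻¹ := by
      rw [← Complex.ofReal_mul, Real.mul_self_sqrt (by positivity)]; simp
    have h5 : star ((Real.sqrt ((N : ℝ)⁻¹) : ℝ) : ℂ) = ((Real.sqrt ((N : ℝ)⁻¹) : ℝ) : ℂ) :=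
      Complex.conj_ofReal _
    rw [h5, h4]
    by_cases hu : u = []
    · simp [Pk, hu]
    · by_cases hv : v = []
      · simp [Pk, hv]
      · rw [Pk_ne _ hu hv, Pk_ne _ hu hv, hg _ (by simp [hu]), mul_comm]
  · intro l hl
    rw [hg l hl, norm_mul]
    have h6 : ‖(N : ℂ)⁻¹‖ ≤ 1 := by
      rw [norm_inv, Complex.norm_natCast]
      exact inv_le_one_of_one_le₀ (by exact_mod_cast hN)
    calc _ ≤ 1 * C ^ l.length := mul_le_mul h6 (hC l hl) (norm_nonneg _) zero_le_one
      _ = _ := one_mul _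

lemma exists_R_of_good (f : NCSeries k) (hf : Good (fL f)) :
    ∃ μ : Dist k, IsDc μ ∧ IsRTransform μ f := by
  obtain ⟨μ, h1, h2⟩ := exists_Dc_of_momOK _ (e_of_good _ hf)
  exact ⟨μ, h1, (isR_iff μ f).2 fun l _ => h2 l⟩

lemma mom_eq_e {μ : Dist k} {f : NCSeries k} (hμ : IsDc μ) (h : IsRTransform μ f) :
    mom μ = eW (fL f) [] := by
  funext l
  by_cases hl : l = []
  · rw [hl, e_nil_nil, (momOK_of_Dc μ hμ).1]
  · exact (isR_iff μ f).1 h l hl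

lemma mom_eq_b {μ : Dist k} {f : NCSeries k} (hμ : IsDc μ) (h : IsEtaSeries μ f) :
    mom μ = bW (fL f) := by
  funext l
  by_cases hl : l = []
  · rw [hl, b_nil, (momOK_of_Dc μ hμ).1]
  · exact (isEta_iff μ f).1 h l hl

lemma main_iff (f : NCSeries k) :
    (∃ μ : Dist k, IsDc μ ∧ IsEtaSeries μ f) ↔
    (∃ μ : Dist k, IsInfDiv μ ∧ IsRTransform μ f) := by
  constructor
  · rintro ⟨μ, hμ, he⟩
    have hm := momOK_of_Dc μ hμ
    rw [mom_eq_b hμ he] at hm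
    have hg := good_of_b _ hm
    obtain ⟨μ', h1, h2⟩ := exists_R_of_good f hg
    refine ⟨μ', ⟨h1, fun N hN => ?_⟩, h2⟩
    have hN0 : (N : ℂ) ≠ 0 := by exact_mod_cast hN.ne'
    obtain ⟨ν, h3, h4⟩ := exists_R_of_good (fun n w => (N : ℂ)⁻¹ * f n w)
      (good_smul hg N hN (fL_smul f _))
    refine ⟨ν, h3, _, h4, ?_⟩
    have : (fun n w => (N : ℂ) * ((N : ℂ)⁻¹ * f n w)) = f := by
      funext n w
      rw [mul_inv_cancel_left₀ hN0]
    rw [this]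
    exact h2
  · rintro ⟨μ, ⟨hμ, hdiv⟩, hR⟩
    have hm := momOK_of_Dc μ hμ
    have hme := mom_eq_e hμ hR
    rw [hme] at hm
    have hg : Good (fL f) := by
      refine good_of_e _ hm fun N hN => ?_
      have hN0 : (N : ℂ) ≠ 0 := by exact_mod_cast hN.ne'
      obtain ⟨ν, hν, g, hg1, hg2⟩ := hdiv N hN
      have h1 := mom_eq_e hμ hg2
      rw [hme] at h1
      have h2 : ∀ l, l ≠ [] → (N : ℂ)⁻¹ * fL f l = fL g l := by
        intro l hl
        rw [f_unique (fun l => congrFun h1 l) l hl, fL_smul g _ l hl, inv_mul_cancel_left₀ hN0]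
      have h3 : eW (fun l => (N : ℂ)⁻¹ * fL f l) [] = mom ν := by
        rw [mom_eq_e hν hg1]
        funext l
        exact e_congr h2 l []
      rw [h3]
      exact momOK_of_Dc ν hν
    obtain ⟨μ', h1, h2⟩ := exists_Dc_of_momOK _ (b_of_good _ hg)
    exact ⟨μ', h1, (isEta_iff μ' f).2 fun l _ => h2 l⟩

end Final


/-- Lemma 5.7 / Theorem 1.1°: `R^{inf-div}(k) = E_c(k)` : a series
`f` is the `η`-series of some `μ ∈ D_c(k)` iff `f` is the `R`-transform of some
`⊞`-infinitely divisible distribution in `D_c(k)`. -/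
theorem statement12 (k : ℕ) (hk : 0 < k) (f : NCSeries k) :
    (∃ μ : Dist k, IsDc μ ∧ IsEtaSeries μ f) ↔
    (∃ μ : Dist k, IsInfDiv μ ∧ IsRTransform μ f) := by
  exact main_iff f
end BBP
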